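/- Let n ≥ 2, m ≥ 1, and let Ω be a domain in ℝⁿ. Let 𝔘(Ω) be the set of m-component vector-valued functions u whose components are harmonic in Ω and which satisfy sup_Ω |u| ≤ 1. Suppose a point ξ ∈ ∂Ω can be touched by an interior ball B ⊂ Ω. Then limsup_{x→ξ} sup_{u∈𝔘(Ω)} max_{|ℓ|=1} |x−ξ| · |(ℓ, ∇)u(x)| ≤ C_n, where x ranges over points of the radius of B directed from the center of B to ξ, and C_n = 4(n−1)^{(n−1)/2} ω_{n−1} / (n^{n/2} ω_n). -/

import Mathlib

open MeasureTheory Real Filter Metric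
open scoped Real RealInnerProductSpace

noncomputable section

/-- `Eu n` is the Euclidean space `ℝⁿ`. -/
abbrev Eu (n : ℕ) := EuclideanSpace ℝ (Fin n)

/-- `ω_n`: the surface area of the unit sphere `S^{n-1}` in `ℝⁿ`,
given by the classical formula `2 π^{n/2} / Γ(n/2)`. -/
def sphereArea (n : ℕ) : ℝ := 2 * π ^ ((n : ℝ) / 2) / Real.Gamma ((n : ℝ) / 2)

/-- A function is harmonic on a set: it is twice continuously differentiable
there and its Laplacian (the sum of the pure second partial derivatives in the
coordinate directions) vanishes at every point of the set. -/
def IsHarmonicOn {n : ℕ} (u : Eu n → ℝ) (Ω : Set (Eu n)) : Prop :=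
  ContDiffOn ℝ 2 u Ω ∧ ∀ x ∈ Ω,
    ∑ i, fderiv ℝ (fun y => fderiv ℝ u y (EuclideanSpace.single i 1)) x
      (EuclideanSpace.single i 1) = 0

/-- The constant `C_n = 4 (n-1)^{(n-1)/2} ω_{n-1} / (n^{n/2} ω_n)`. -/
def Cconst (n : ℕ) : ℝ :=
  4 * ((n : ℝ) - 1) ^ (((n : ℝ) - 1) / 2) * sphereArea (n - 1) /
    ((n : ℝ) ^ ((n : ℝ) / 2) * sphereArea n)

/-!
Blowing up by `|x - ξ|`, the ball contains an arbitrarily large piece of the half-space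
`⟪ν, z⟫ < 1`, so it suffices to show `‖∂_l v 0‖ ≤ C_n + o(1)` for `v` harmonic with `‖v‖ ≤ 1` there.
Up to the factor `-ω_n`, `∂_l v 0` is the limit of `∫ v Δβ` over smoothings `β` of the dipole
`⟪l, z⟫ / ‖z‖ ^ n`. Subtracting from `β` its mirror images in the hyperplanes `⟪ν, z⟫ = σ`, averaged
over `σ` near `1` with weight `φ`, leaves `2 ∫ φ(⟪ν, z⟫) v ∂_ν β` up to a small error. As `∂_ν β` is
homogeneous of degree `-n`, this is bounded by the integral of `|⟪l, ν⟫ - n ⟪l, e⟫ ⟪ν, e⟫|` over the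
unit sphere; polarization reduces that integral to `l = ν`, where the gnomonic projection evaluates
it to `C_n ω_n`.
-/

section

open Set Topology InnerProductSpace Module
open scoped ENNReal

section Polar

variable {E : Type*} [NormedAddCommGroup E] [NormedSpace ℝ E] [FiniteDimensional ℝ E]
  [MeasurableSpace E] [BorelSpace E] (μ : Measure E) [μ.IsAddHaarMeasure]

lemma ofReal_pow_mul_lintegral_comp_smul {g : E → ℝ≥0∞} (hg : Measurable g) {t : ℝ} (ht : 0 < t) :
    ENNReal.ofReal (t ^ finrank ℝ E) * ∫⁻ y, g (t • y) ∂μ = ∫⁻ y, g y ∂μ := by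
  rw [← lintegral_map hg (measurable_const_smul t), Measure.map_addHaar_smul _ ht.ne',
    lintegral_smul_measure, smul_eq_mul, ← mul_assoc, ← ENNReal.ofReal_mul (by positivity),
    abs_of_pos (by positivity), mul_inv_cancel₀ (by positivity), ENNReal.ofReal_one, one_mul]

variable [Nontrivial E]

lemma lintegral_eq_lintegral_toSphere_lintegral_Ioi {f : E → ℝ≥0∞} (hf : Measurable f) :
    ∫⁻ z, f z ∂μ = ∫⁻ e : sphere (0 : E) 1, (∫⁻ r in Ioi (0 : ℝ),
      ENNReal.ofReal (r ^ (finrank ℝ E - 1)) * f (r • (e : E))) ∂μ.toSphere := by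
  let g : sphere (0 : E) 1 × Ioi (0 : ℝ) → ℝ≥0∞ := fun p ↦ f ((p.2 : ℝ) • (p.1 : E))
  have hg : Measurable g := hf.comp (by fun_prop)
  have hfg (x : ({0}ᶜ : Set E)) : f x = g (homeomorphUnitSphereProd E x) := by
    simp [g, smul_smul, norm_ne_zero_iff.2 x.2]
  have inner_integral (e : sphere (0 : E) 1) :
      ∫⁻ r, g (e, r) ∂Measure.volumeIoiPow (finrank ℝ E - 1) =
        ∫⁻ r in Ioi (0 : ℝ), ENNReal.ofReal (r ^ (finrank ℝ E - 1)) * f (r • (e : E)) := by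
    rw [Measure.volumeIoiPow, lintegral_withDensity_eq_lintegral_mul _ (by fun_prop) (by fun_prop)]
    exact lintegral_subtype_comap measurableSet_Ioi
      (fun r : ℝ ↦ ENNReal.ofReal (r ^ (finrank ℝ E - 1)) * f (r • (e : E)))
  calc ∫⁻ z, f z ∂μ = ∫⁻ x : ({0}ᶜ : Set E), f x ∂μ.comap Subtype.val := by
        rw [lintegral_subtype_comap (measurableSet_singleton _).compl f, restrict_compl_singleton]
    _ = ∫⁻ p, g p ∂μ.toSphere.prod (.volumeIoiPow (finrank ℝ E - 1)) := by
        simp_rw [hfg]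
        exact μ.measurePreserving_homeomorphUnitSphereProd.lintegral_comp hg
    _ = _ := by rw [lintegral_prod _ hg.aemeasurable]; simp_rw [inner_integral]

lemma setLIntegral_ball_comp_normalize {H : E → ℝ≥0∞} (hH : Measurable H) :
    finrank ℝ E * ∫⁻ z in ball (0 : E) 1, H (‖z‖⁻¹ • z) ∂μ =
      ∫⁻ e : sphere (0 : E) 1, H e ∂μ.toSphere := by
  set radial : ℝ≥0∞ := ∫⁻ r in Ioi (0 : ℝ), (Iio (1 : ℝ)).indicator
    (fun r ↦ ENNReal.ofReal (r ^ (finrank ℝ E - 1))) r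
  have polar {G : E → ℝ≥0∞} (hG : Measurable G) :
      ∫⁻ z in ball (0 : E) 1, G (‖z‖⁻¹ • z) ∂μ =
        radial * ∫⁻ e : sphere (0 : E) 1, G e ∂μ.toSphere := by
    have hG' : Measurable fun z : E ↦ G (‖z‖⁻¹ • z) := by fun_prop
    rw [← lintegral_indicator measurableSet_ball, lintegral_eq_lintegral_toSphere_lintegral_Ioi μ
      (hG'.indicator measurableSet_ball), ← lintegral_const_mul _ (by fun_prop)]
    refine lintegral_congr fun e ↦ ?_
    rw [← lintegral_mul_const _ ((by fun_prop : Measurable _).indicator measurableSet_Iio)]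
    refine setLIntegral_congr_fun measurableSet_Ioi fun r (hr : 0 < r) ↦ ?_
    by_cases hr1 : r < 1 <;>
      simp [indicator, norm_smul, smul_smul, abs_of_pos hr, hr.ne', hr1]
  have total : (finrank ℝ E * radial) * μ (ball 0 1) = 1 * μ (ball 0 1) := by
    have := polar (G := 1) measurable_const
    simp only [Pi.one_apply, lintegral_one, Measure.restrict_apply MeasurableSet.univ, univ_inter,
      Measure.toSphere_apply_univ] at this
    rw [one_mul]
    nth_rw 2 [this]
    ring
  have normalization : (finrank ℝ E : ℝ≥0∞) * radial = 1 :=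
    (ENNReal.mul_left_inj (measure_ball_pos μ _ one_pos).ne' measure_ball_lt_top.ne).1 total
  rw [polar hH, ← mul_assoc, normalization, one_mul]

end Polar

section SphereIntegrals

lemma exists_linearIsometryEquiv_apply_eq {E F : Type*}
    [NormedAddCommGroup E] [InnerProductSpace ℝ E] [FiniteDimensional ℝ E]
    [NormedAddCommGroup F] [InnerProductSpace ℝ F] [FiniteDimensional ℝ F]
    (hEF : finrank ℝ E = finrank ℝ F) {p : E} {b : F}
    (hpb : ‖p‖ = ‖b‖) : ∃ T : E ≃ₗᵢ[ℝ] F, T p = b := by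
  let S : E ≃ₗᵢ[ℝ] F := (stdOrthonormalBasis ℝ E).equiv (stdOrthonormalBasis ℝ F) (finCongr hEF)
  refine ⟨S.trans (ℝ ∙ (S p - b))ᗮ.reflection, ?_⟩
  exact Submodule.reflection_sub (by rw [S.norm_map, hpb])

variable {E : Type*} [NormedAddCommGroup E] [InnerProductSpace ℝ E] [FiniteDimensional ℝ E]
  [MeasurableSpace E] [BorelSpace E]

lemma ae_inner_ne_zero {ν : E} (hν : ν ≠ 0) : ∀ᵐ z : E, ⟪ν, z⟫ ≠ 0 := by
  have orthogonal_null : volume (((ℝ ∙ ν)ᗮ : Submodule ℝ E) : Set E) = 0 := by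
    refine Measure.addHaar_submodule _ _ fun h ↦ hν ?_
    have : ν ∈ (ℝ ∙ ν)ᗮ := h ▸ Submodule.mem_top
    exact inner_self_eq_zero.1 (Submodule.mem_orthogonal_singleton_iff_inner_right.1 this)
  refine measure_mono_null (fun z hz ↦ ?_) orthogonal_null
  simpa [Submodule.mem_orthogonal_singleton_iff_inner_right] using hz

variable [Nontrivial E]

/-- The integral of `H` over the unit sphere of `E` with respect to surface measure. -/
def sphereLIntegral (H : E → ℝ≥0∞) : ℝ≥0∞ :=
  ∫⁻ e : sphere (0 : E) 1, H e ∂(volume : Measure E).toSphere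

lemma sphereLIntegral_comp_linearIsometryEquiv {F : Type*} [NormedAddCommGroup F]
    [InnerProductSpace ℝ F] [FiniteDimensional ℝ F] [Nontrivial F] [MeasurableSpace F]
    [BorelSpace F] {H : F → ℝ≥0∞} (hH : Measurable H)
    (T : E ≃ₗᵢ[ℝ] F) : sphereLIntegral (fun z ↦ H (T z)) = sphereLIntegral H := by
  have hT : Measurable fun z ↦ H (T z) := hH.comp T.continuous.measurable
  rw [sphereLIntegral, sphereLIntegral, ← setLIntegral_ball_comp_normalize volume hH,
    ← setLIntegral_ball_comp_normalize volume hT, T.toLinearEquiv.finrank_eq]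
  congr 1
  have hH' : Measurable fun z : F ↦ H (‖z‖⁻¹ • z) := by fun_prop
  rw [← lintegral_indicator measurableSet_ball, ← lintegral_indicator measurableSet_ball,
    ← T.measurePreserving.lintegral_comp (hH'.indicator measurableSet_ball)]
  refine lintegral_congr fun z ↦ ?_
  simp only [indicator, mem_ball_zero_iff, LinearIsometryEquiv.norm_map, map_smul]

lemma sphereLIntegral_indicator_halfSpace {H : E → ℝ≥0∞} (hH : Measurable H)
    (H_even : ∀ z, H (-z) = H z) {ν : E} (hν : ν ≠ 0) :
    2 * sphereLIntegral ({z | 0 < ⟪ν, z⟫}.indicator H) = sphereLIntegral H := by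
  have measurable_half (w : E) : Measurable ({z | 0 < ⟪w, z⟫}.indicator H) :=
    hH.indicator (measurableSet_lt measurable_const (by fun_prop))
  have opposite : sphereLIntegral ({z | 0 < ⟪-ν, z⟫}.indicator H) =
      sphereLIntegral ({z | 0 < ⟪ν, z⟫}.indicator H) := by
    rw [← sphereLIntegral_comp_linearIsometryEquiv (measurable_half ν) (LinearIsometryEquiv.neg ℝ)]
    congr 1 with z
    simp [indicator, H_even]
  have sum_eq : (fun z : E ↦ {z | 0 < ⟪ν, z⟫}.indicator H (‖z‖⁻¹ • z) +
      {z | 0 < ⟪-ν, z⟫}.indicator H (‖z‖⁻¹ • z)) =ᵐ[volume] fun z ↦ H (‖z‖⁻¹ • z) := by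
    filter_upwards [ae_inner_ne_zero hν] with z hz
    have hz0 : 0 < ‖z‖⁻¹ := inv_pos.2 (norm_pos_iff.2 fun h ↦ hz (by simp [h]))
    rcases lt_or_gt_of_ne hz with h | h <;>
      simp [indicator, inner_smul_right, mul_pos_iff_of_pos_left, hz0, mul_neg_iff,
        (norm_nonneg z).not_gt, h, h.not_gt]
  calc 2 * sphereLIntegral ({z | 0 < ⟪ν, z⟫}.indicator H)
      = sphereLIntegral (fun z ↦ {z | 0 < ⟪ν, z⟫}.indicator H z +
          {z | 0 < ⟪-ν, z⟫}.indicator H z) := by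
        rw [two_mul]
        nth_rw 2 [← opposite]
        exact (lintegral_add_left ((measurable_half ν).comp measurable_subtype_coe) _).symm
    _ = sphereLIntegral H := by
        rw [sphereLIntegral, sphereLIntegral, ← setLIntegral_ball_comp_normalize volume hH,
          ← lintegral_congr_ae (ae_restrict_of_ae sum_eq)]
        exact (setLIntegral_ball_comp_normalize volume
          ((measurable_half ν).add (measurable_half (-ν)))).symm

lemma lintegral_ofReal_mul_comp_const_mul {g : ℝ → ℝ≥0∞} (hg : Measurable g) {p : ℝ} (hp : 0 < p) :
    ∫⁻ r in Ioi 0, ENNReal.ofReal p * g (p * r) = ∫⁻ s in Ioi 0, g s := by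
  have hg' : Measurable ((Ioi 0).indicator g) := hg.indicator measurableSet_Ioi
  rw [← lintegral_indicator measurableSet_Ioi, ← lintegral_indicator measurableSet_Ioi]
  conv_rhs => rw [← Real.smul_map_volume_mul_left hp.ne', lintegral_smul_measure,
    lintegral_map hg' (by fun_prop), abs_of_pos hp, smul_eq_mul,
    ← lintegral_const_mul _ (by fun_prop)]
  refine lintegral_congr fun r ↦ ?_
  by_cases hr : 0 < r <;> simp [indicator, hp, hr]

lemma lintegral_halfSpace_comp_inner_mul {H : E → ℝ≥0∞} (hH : Measurable H) {w : ℝ → ℝ≥0∞}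
    (hw : Measurable w) (ν : E) :
    ∫⁻ z in {z | 0 < ⟪ν, z⟫}, w ⟪ν, z⟫ *
        (ENNReal.ofReal (‖z‖ ^ finrank ℝ E)⁻¹ * H (‖z‖⁻¹ • z)) =
      (∫⁻ s in Ioi 0, w s * ENNReal.ofReal s⁻¹) *
        sphereLIntegral ({z | 0 < ⟪ν, z⟫}.indicator H) := by
  have measurableSet_half : MeasurableSet {z : E | 0 < ⟪ν, z⟫} :=
    measurableSet_lt measurable_const (by fun_prop)
  rw [← lintegral_indicator measurableSet_half, lintegral_eq_lintegral_toSphere_lintegral_Ioi _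
    (Measurable.indicator (by fun_prop) measurableSet_half), sphereLIntegral,
    ← lintegral_const_mul _ (by fun_prop (disch := exact measurableSet_half))]
  refine lintegral_congr fun e ↦ ?_
  by_cases he : 0 < ⟪ν, (e : E)⟫
  · rw [indicator_of_mem (by exact he),
      ← lintegral_ofReal_mul_comp_const_mul (g := fun s ↦ w s * ENNReal.ofReal s⁻¹)
        (by fun_prop) he,
      ← lintegral_mul_const _ (by fun_prop)]
    refine setLIntegral_congr_fun measurableSet_Ioi fun r (hr : 0 < r) ↦ ?_
    have density : ENNReal.ofReal (r ^ (finrank ℝ E - 1)) * ENNReal.ofReal (r ^ finrank ℝ E)⁻¹ =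
        ENNReal.ofReal ⟪ν, (e : E)⟫ * ENNReal.ofReal (⟪ν, (e : E)⟫ * r)⁻¹ := by
      rw [← ENNReal.ofReal_mul (by positivity), ← ENNReal.ofReal_mul (by positivity)]
      obtain ⟨k, hk⟩ := Nat.exists_eq_succ_of_ne_zero (finrank_pos (R := ℝ) (M := E)).ne'
      simp only [hk, Nat.succ_eq_add_one, Nat.add_sub_cancel]
      congr 1
      have := he.ne'
      field_simp
      exact (pow_succ r k).symm
    have hmem : r • (e : E) ∈ {z : E | 0 < ⟪ν, z⟫} := by
      simpa only [mem_ofPred_eq, inner_smul_right] using mul_pos hr he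
    simp only [indicator_of_mem hmem, inner_smul_right, norm_smul, Real.norm_of_nonneg hr.le,
      norm_eq_of_mem_sphere, mul_one, smul_smul, inv_mul_cancel₀ hr.ne', one_smul]
    rw [mul_comm r]
    calc _ = (ENNReal.ofReal (r ^ (finrank ℝ E - 1)) * ENNReal.ofReal (r ^ finrank ℝ E)⁻¹) *
            (w (⟪ν, (e : E)⟫ * r) * H e) := by ring
      _ = _ := by rw [density]; ring
  · have hr (r : ℝ) (hr : r ∈ Ioi 0) : r • (e : E) ∉ {z : E | 0 < ⟪ν, z⟫} := fun h ↦ he <| by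
      rw [mem_ofPred_eq, inner_smul_right] at h
      exact pos_of_mul_pos_right h (le_of_lt hr)
    rw [indicator_of_notMem (by exact he), mul_zero,
      setLIntegral_congr_fun (g := 0) measurableSet_Ioi fun r h ↦ by
        simp [indicator_of_notMem (hr r h)]]
    simp

end SphereIntegrals

section GnomonicProjection

lemma norm_toLp_one_prod {V : Type*} [NormedAddCommGroup V] (y : V) :
    ‖WithLp.toLp 2 ((1 : ℝ), y)‖ = √(1 + ‖y‖ ^ 2) := by
  simp [WithLp.prod_norm_eq_of_L2]

variable {V : Type*} [NormedAddCommGroup V] [InnerProductSpace ℝ V] [FiniteDimensional ℝ V]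

lemma finrank_withLp_real_prod : finrank ℝ (WithLp 2 (ℝ × V)) = finrank ℝ V + 1 := by
  rw [(WithLp.linearEquiv 2 ℝ (ℝ × V)).finrank_eq, finrank_prod, finrank_self, add_comm]

variable [MeasurableSpace V] [BorelSpace V]

lemma lintegral_withLp_prod {U : Type*} [NormedAddCommGroup U] [InnerProductSpace ℝ U]
    [FiniteDimensional ℝ U] [MeasurableSpace U] [BorelSpace U] {f : WithLp 2 (U × V) → ℝ≥0∞}
    (hf : Measurable f) : ∫⁻ z, f z = ∫⁻ u : U, ∫⁻ v : V, f (WithLp.toLp 2 (u, v)) := by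
  have preserving := WithLp.volume_preserving_toLp U V
  rw [← preserving.lintegral_comp hf, Measure.volume_eq_prod]
  exact lintegral_prod _ (hf.comp preserving.measurable).aemeasurable

/-- The integral of `H` over the open upper hemisphere of `ℝ × V`, pulled back to the tangent
hyperplane `V` at the pole by the gnomonic projection. -/
def gnomonicLIntegral (H : WithLp 2 (ℝ × V) → ℝ≥0∞) : ℝ≥0∞ :=
  ∫⁻ y : V, ENNReal.ofReal (√(1 + ‖y‖ ^ 2) ^ (finrank ℝ V + 1))⁻¹ *
    H ((√(1 + ‖y‖ ^ 2))⁻¹ • WithLp.toLp 2 ((1 : ℝ), y))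

lemma lintegral_slice_comp_normalize {H : WithLp 2 (ℝ × V) → ℝ≥0∞} (hH : Measurable H) {t : ℝ}
    (ht : 0 < t) :
    ∫⁻ y : V, ENNReal.ofReal (‖WithLp.toLp 2 (t, y)‖ ^ (finrank ℝ V + 1))⁻¹ *
        H (‖WithLp.toLp 2 (t, y)‖⁻¹ • WithLp.toLp 2 (t, y)) =
      ENNReal.ofReal t⁻¹ * gnomonicLIntegral H := by
  have smul_slice (y : V) : WithLp.toLp 2 (t, t • y) = t • WithLp.toLp 2 ((1 : ℝ), y) := by
    simp [← WithLp.toLp_smul]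
  rw [gnomonicLIntegral, ← ofReal_pow_mul_lintegral_comp_smul volume (by fun_prop) ht,
    ← lintegral_const_mul _ (by fun_prop), ← lintegral_const_mul _ (by fun_prop)]
  refine lintegral_congr fun y ↦ ?_
  rw [smul_slice, norm_smul, Real.norm_of_nonneg ht.le, norm_toLp_one_prod, smul_smul, mul_inv,
    mul_right_comm, inv_mul_cancel₀ ht.ne', one_mul, ← mul_assoc, ← mul_assoc,
    ← ENNReal.ofReal_mul (by positivity), ← ENNReal.ofReal_mul (by positivity)]
  congr 2
  field_simp
  ring

lemma sphereLIntegral_indicator_eq_gnomonicLIntegral {H : WithLp 2 (ℝ × V) → ℝ≥0∞}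
    (hH : Measurable H) :
    sphereLIntegral ({z | 0 < ⟪WithLp.toLp 2 ((1 : ℝ), (0 : V)), z⟫}.indicator H) =
      gnomonicLIntegral H := by
  let slab : ℝ → ℝ≥0∞ := (Ioc 1 2).indicator ENNReal.ofReal
  have slab_measurable : Measurable slab := ENNReal.measurable_ofReal.indicator measurableSet_Ioc
  have slab_mul_inv (s : ℝ) (K : ℝ≥0∞) : slab s * (ENNReal.ofReal s⁻¹ * K) =
      (Ioc 1 2).indicator (fun _ ↦ K) s := by
    by_cases hs : s ∈ Ioc 1 2
    · have hs0 : 0 < s := one_pos.trans hs.1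
      simp [slab, hs, ← mul_assoc, ← ENNReal.ofReal_mul hs0.le, hs0.ne']
    · simp [slab, hs]
  have slab_lintegral (K : ℝ≥0∞) :
      ∫⁻ s in Ioi 0, slab s * (ENNReal.ofReal s⁻¹ * K) = K := by
    simp only [slab_mul_inv]
    rw [setLIntegral_indicator measurableSet_Ioc,
      inter_eq_left.2 (Ioc_subset_Ioi_self.trans (Ioi_subset_Ioi zero_le_one))]
    norm_num
  have layers := lintegral_halfSpace_comp_inner_mul hH slab_measurable
    (WithLp.toLp 2 ((1 : ℝ), (0 : V)))
  have total := slab_lintegral 1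
  simp only [mul_one] at total
  rw [total, one_mul, ← lintegral_indicator (measurableSet_lt measurable_const (by fun_prop)),
    lintegral_withLp_prod (Measurable.indicator (by fun_prop)
      (measurableSet_lt measurable_const (by fun_prop)))] at layers
  rw [← layers, ← slab_lintegral (gnomonicLIntegral H), ← lintegral_indicator measurableSet_Ioi]
  refine lintegral_congr fun t ↦ ?_
  by_cases ht : 0 < t
  · rw [indicator_of_mem (by exact ht), ← lintegral_slice_comp_normalize hH ht,
      ← lintegral_const_mul _ (by fun_prop)]
    simp [indicator, ht, finrank_withLp_real_prod]
  · simp [indicator, ht]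

end GnomonicProjection

section SphereArea

lemma sphereArea_pos {n : ℕ} (hn : 0 < n) : 0 < sphereArea n := by
  have := Real.Gamma_pos_of_pos (show (0 : ℝ) < n / 2 by positivity)
  unfold sphereArea
  positivity

lemma Cconst_nonneg {n : ℕ} (hn : 2 ≤ n) : 0 ≤ Cconst n := by
  have hn₁ : (0 : ℝ) ≤ n - 1 := by simpa using (by lia : 1 ≤ n)
  have := sphereArea_pos (by lia : 0 < n)
  have := sphereArea_pos (by lia : 0 < n - 1)
  unfold Cconst
  positivity

variable (E : Type*) [NormedAddCommGroup E] [InnerProductSpace ℝ E] [FiniteDimensional ℝ E]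
  [Nontrivial E] [MeasurableSpace E] [BorelSpace E]

lemma finrank_mul_volume_ball :
    finrank ℝ E * volume (ball (0 : E) 1) = ENNReal.ofReal (sphereArea (finrank ℝ E)) := by
  have hn : (0 : ℝ) < finrank ℝ E := Nat.cast_pos.2 finrank_pos
  have hΓ := (Real.Gamma_pos_of_pos (half_pos hn)).ne'
  rw [InnerProductSpace.volume_ball, sphereArea, ENNReal.ofReal_one, one_pow, one_mul,
    ← ENNReal.ofReal_natCast, ← ENNReal.ofReal_mul hn.le, Real.Gamma_add_one (half_pos hn).ne',
    Real.sqrt_eq_rpow, ← Real.rpow_mul_natCast pi_nonneg, one_div_mul_eq_div]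
  congr 1
  field_simp

lemma toSphere_univ_eq_ofReal_sphereArea :
    (volume : Measure E).toSphere univ = ENNReal.ofReal (sphereArea (finrank ℝ E)) := by
  rw [Measure.toSphere_apply_univ, finrank_mul_volume_ball]

end SphereArea

section GnomonicProfile

/-- The antiderivative `s ^ k / (1 + s²) ^ ((k + 1) / 2)` of the radial density which
`1 - (k + 1) ⟪p, e⟫²` acquires under the gnomonic projection from the pole `p`. -/
def gnomonicProfile (k : ℕ) (s : ℝ) : ℝ := s ^ k / √(1 + s ^ 2) ^ (k + 1)

/-- The derivative of `gnomonicProfile`, which changes sign once, at `√k`. -/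
def gnomonicDensity (k : ℕ) (s : ℝ) : ℝ := s ^ (k - 1) / √(1 + s ^ 2) ^ (k + 3) * (k - s ^ 2)

variable {k : ℕ}

lemma continuous_gnomonicDensity : Continuous (gnomonicDensity k) := by
  have (s : ℝ) : √(1 + s ^ 2) ^ (k + 3) ≠ 0 := by positivity
  unfold gnomonicDensity
  fun_prop (disch := assumption)

lemma hasDerivAt_gnomonicProfile (hk : 0 < k) (s : ℝ) :
    HasDerivAt (gnomonicProfile k) (gnomonicDensity k s) s := by
  have h0 : (0 : ℝ) < 1 + s ^ 2 := by positivity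
  have hasDerivAt_sqrt : HasDerivAt (fun s : ℝ ↦ √(1 + s ^ 2)) (s / √(1 + s ^ 2)) s := by
    refine (((hasDerivAt_pow 2 s).const_add 1).sqrt h0.ne').congr_deriv ?_
    field_simp
    norm_num
  have hq0 : √(1 + s ^ 2) ≠ 0 := by positivity
  refine ((hasDerivAt_pow k s).div (hasDerivAt_sqrt.pow (k + 1)) (pow_ne_zero _ hq0)).congr_deriv ?_
  obtain ⟨j, rfl⟩ := Nat.exists_eq_succ_of_ne_zero hk.ne'
  have hq : √(1 + s ^ 2) ^ 2 = 1 + s ^ 2 := Real.sq_sqrt h0.le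
  simp only [gnomonicDensity, Nat.succ_eq_add_one, Nat.add_sub_cancel, Pi.pow_apply]
  set q := √(1 + s ^ 2)
  field_simp
  push_cast
  linear_combination ((j : ℝ) + 1) * s ^ j * q ^ (2 * j + 5) * hq

lemma tendsto_gnomonicProfile_atTop : Tendsto (gnomonicProfile k) atTop (𝓝 0) := by
  refine squeeze_zero' (g := fun s : ℝ ↦ s⁻¹) ?_ ?_ tendsto_inv_atTop_zero
  · filter_upwards [eventually_gt_atTop 0] with s hs
    unfold gnomonicProfile
    positivity
  · filter_upwards [eventually_gt_atTop 0] with s hs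
    have : s ≤ √(1 + s ^ 2) := Real.le_sqrt_of_sq_le (by linarith)
    rw [gnomonicProfile, div_le_iff₀ (by positivity)]
    calc s ^ k = s⁻¹ * s ^ (k + 1) := by field_simp; ring
      _ ≤ s⁻¹ * √(1 + s ^ 2) ^ (k + 1) := by gcongr

lemma setLIntegral_abs_gnomonicDensity_Ioc (hk : 0 < k) :
    ∫⁻ s in Ioc 0 √k, ENNReal.ofReal |gnomonicDensity k s| =
      ENNReal.ofReal (gnomonicProfile k √k) := by
  have nonneg (s : ℝ) (hs : s ∈ Ioc 0 √(k : ℝ)) : 0 ≤ gnomonicDensity k s := by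
    have hs0 := hs.1
    have : s ^ 2 ≤ k := (Real.le_sqrt hs0.le (by positivity)).1 hs.2
    have : 0 ≤ k - s ^ 2 := sub_nonneg.2 this
    unfold gnomonicDensity
    positivity
  rw [setLIntegral_congr_fun measurableSet_Ioc fun s hs ↦ by rw [abs_of_nonneg (nonneg s hs)],
    ← ofReal_integral_eq_lintegral_ofReal continuous_gnomonicDensity.integrableOn_Ioc
      ((ae_restrict_iff' measurableSet_Ioc).2 (ae_of_all _ nonneg)),
    ← intervalIntegral.integral_of_le (Real.sqrt_nonneg _),
    intervalIntegral.integral_eq_sub_of_hasDerivAt (fun s _ ↦ hasDerivAt_gnomonicProfile hk s)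
      (continuous_gnomonicDensity.intervalIntegrable _ _)]
  simp [gnomonicProfile, hk.ne']

lemma setLIntegral_abs_gnomonicDensity_Ioi (hk : 0 < k) :
    ∫⁻ s in Ioi √k, ENNReal.ofReal |gnomonicDensity k s| =
      ENNReal.ofReal (gnomonicProfile k √k) := by
  have nonpos (s : ℝ) (hs : s ∈ Ioi √(k : ℝ)) : gnomonicDensity k s ≤ 0 := by
    have hs0 : 0 < s := (Real.sqrt_nonneg _).trans_lt hs
    have : (k : ℝ) ≤ s ^ 2 := (Real.sqrt_le_left hs0.le).1 (le_of_lt hs)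
    exact mul_nonpos_of_nonneg_of_nonpos (by positivity) (sub_nonpos.2 this)
  have hderiv (s : ℝ) (_ : s ∈ Ici √(k : ℝ)) := hasDerivAt_gnomonicProfile hk s
  rw [setLIntegral_congr_fun measurableSet_Ioi fun s hs ↦ by rw [abs_of_nonpos (nonpos s hs)],
    ← ofReal_integral_eq_lintegral_ofReal (f := fun s ↦ -gnomonicDensity k s)
      (integrableOn_Ioi_deriv_of_nonpos' hderiv nonpos tendsto_gnomonicProfile_atTop).neg
      ((ae_restrict_iff' measurableSet_Ioi).2 (ae_of_all _ fun s hs ↦ neg_nonneg.2 (nonpos s hs))),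
    integral_neg,
    integral_Ioi_of_hasDerivAt_of_nonpos' hderiv nonpos tendsto_gnomonicProfile_atTop]
  simp

lemma setLIntegral_abs_gnomonicDensity (hk : 0 < k) :
    ∫⁻ s in Ioi 0, ENNReal.ofReal |gnomonicDensity k s| =
      ENNReal.ofReal (2 * gnomonicProfile k √k) := by
  rw [← Ioc_union_Ioi_eq_Ioi (Real.sqrt_nonneg k),
    lintegral_union measurableSet_Ioi (Ioc_disjoint_Ioi le_rfl),
    setLIntegral_abs_gnomonicDensity_Ioc hk, setLIntegral_abs_gnomonicDensity_Ioi hk,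
    ← two_mul, ENNReal.ofReal_mul zero_le_two, ENNReal.ofReal_ofNat]

lemma gnomonicProfile_sqrt :
    gnomonicProfile k √k = (k : ℝ) ^ ((k : ℝ) / 2) / ((k : ℝ) + 1) ^ (((k : ℝ) + 1) / 2) := by
  rw [gnomonicProfile, Real.sq_sqrt k.cast_nonneg, add_comm 1 (k : ℝ), Real.sqrt_eq_rpow,
    Real.sqrt_eq_rpow, ← Real.rpow_mul_natCast (by positivity),
    ← Real.rpow_mul_natCast (by positivity), one_div_mul_eq_div, one_div_mul_eq_div]
  push_cast
  rfl

end GnomonicProfile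

section DipoleKernel

variable {E : Type*} [NormedAddCommGroup E] [InnerProductSpace ℝ E]

/-- `|⟪l, ν⟫ - n ⟪l, e⟫ ⟪ν, e⟫|` with `n = dim E`: on the unit sphere, the absolute value of the
derivative in the direction `ν` of the dipole field `⟪l, z⟫ / ‖z‖ ^ n`. -/
def dipoleKernel (l ν e : E) : ℝ≥0∞ :=
  ENNReal.ofReal |⟪l, ν⟫ - finrank ℝ E * (⟪l, e⟫ * ⟪ν, e⟫)|

@[fun_prop]
lemma measurable_dipoleKernel [MeasurableSpace E] [BorelSpace E] [SecondCountableTopology E]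
    (l ν : E) : Measurable (dipoleKernel l ν) := by
  unfold dipoleKernel
  fun_prop

lemma dipoleKernel_neg (l ν e : E) : dipoleKernel l ν (-e) = dipoleKernel l ν e := by
  simp [dipoleKernel]

lemma dipoleKernel_smul_self (c : ℝ) (p e : E) :
    dipoleKernel (c • p) (c • p) e = ENNReal.ofReal (c ^ 2) * dipoleKernel p p e := by
  rw [dipoleKernel, dipoleKernel, ← ENNReal.ofReal_mul (sq_nonneg c), ← abs_of_nonneg (sq_nonneg c),
    ← abs_mul]
  simp only [real_inner_smul_left, real_inner_smul_right]
  ring_nf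

lemma dipoleKernel_map {F : Type*} [NormedAddCommGroup F] [InnerProductSpace ℝ F] (T : E ≃ₗᵢ[ℝ] F)
    (l ν e : E) : dipoleKernel (T l) (T ν) (T e) = dipoleKernel l ν e := by
  simp only [dipoleKernel, T.inner_map_map, T.toLinearEquiv.finrank_eq]

-- Polarization: `4 b(l, ν) = b(l + ν, l + ν) - b(l - ν, l - ν)` for the bilinear form `b`.
lemma dipoleKernel_le_add (l ν e : E) :
    dipoleKernel l ν e ≤ ENNReal.ofReal (1 / 4) * dipoleKernel (l + ν) (l + ν) e +
      ENNReal.ofReal (1 / 4) * dipoleKernel (l - ν) (l - ν) e := by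
  simp only [dipoleKernel]
  rw [← ENNReal.ofReal_mul (by norm_num), ← ENNReal.ofReal_mul (by norm_num),
    ← ENNReal.ofReal_add (by positivity) (by positivity), ← mul_add]
  refine ENNReal.ofReal_le_ofReal ?_
  rw [one_div_mul_eq_div, le_div_iff₀ four_pos, ← abs_of_pos (four_pos (α := ℝ)), ← abs_mul]
  refine le_trans (le_of_eq ?_) (abs_sub _ _)
  congr 1
  simp only [inner_add_left, inner_add_right, inner_sub_left, inner_sub_right, real_inner_comm l ν]
  ring

variable [FiniteDimensional ℝ E]

lemma dipoleKernel_gnomonic (y : E) :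
    dipoleKernel (WithLp.toLp 2 ((1 : ℝ), (0 : E))) (WithLp.toLp 2 (1, 0))
        ((√(1 + ‖y‖ ^ 2))⁻¹ • WithLp.toLp 2 (1, y)) =
      ENNReal.ofReal (|finrank ℝ E - ‖y‖ ^ 2| / √(1 + ‖y‖ ^ 2) ^ 2) := by
  have hq : √(1 + ‖y‖ ^ 2) ^ 2 = 1 + ‖y‖ ^ 2 := Real.sq_sqrt (by positivity)
  rw [dipoleKernel, finrank_withLp_real_prod, ← abs_neg]
  nth_rw 1 [← abs_of_pos (by positivity : 0 < √(1 + ‖y‖ ^ 2) ^ 2)]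
  rw [← abs_div]
  simp only [WithLp.prod_inner_apply, inner_self_eq_norm_sq_to_K]
  congr 2
  simp only [WithLp.norm_toLp_fst, norm_one, conj_trivial, RCLike.ofReal_real_eq_id, id_eq, one_pow,
    Nat.cast_add, Nat.cast_one, WithLp.ofLp_smul, Prod.smul_mk, smul_eq_mul, mul_one,
    RCLike.inner_apply, inner_zero_left, add_zero, neg_sub]
  field_simp
  rw [hq]
  ring

variable [MeasurableSpace E] [BorelSpace E]

lemma gnomonicLIntegral_dipoleKernel_self [Nontrivial E] :
    gnomonicLIntegral (dipoleKernel (WithLp.toLp 2 ((1 : ℝ), (0 : E))) (WithLp.toLp 2 (1, 0))) =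
      ENNReal.ofReal (sphereArea (finrank ℝ E) *
        (2 * gnomonicProfile (finrank ℝ E) √(finrank ℝ E))) := by
  rw [gnomonicLIntegral, lintegral_eq_lintegral_toSphere_lintegral_Ioi _ (by fun_prop),
    ENNReal.ofReal_mul (sphereArea_pos finrank_pos).le,
    ← setLIntegral_abs_gnomonicDensity finrank_pos, ← toSphere_univ_eq_ofReal_sphereArea, mul_comm,
    ← lintegral_const]
  refine lintegral_congr fun e ↦ setLIntegral_congr_fun measurableSet_Ioi fun r (hr : 0 < r) ↦ ?_
  have norm_eq : ‖r • (e : E)‖ = r := by simp [norm_smul, hr.le]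
  rw [dipoleKernel_gnomonic, norm_eq]
  rw [← ENNReal.ofReal_mul (by positivity), ← ENNReal.ofReal_mul (by positivity), gnomonicDensity,
    abs_mul, abs_of_nonneg (by positivity : 0 ≤ r ^ (finrank ℝ E - 1) / √(1 + r ^ 2) ^ _)]
  congr 1
  field_simp
  ring

lemma two_mul_gnomonicConstant {k : ℕ} (hk : 0 < k) :
    2 * (sphereArea k * (2 * gnomonicProfile k √k)) = Cconst (k + 1) * sphereArea (k + 1) := by
  have := sphereArea_pos k.succ_pos
  rw [gnomonicProfile_sqrt, Cconst]
  push_cast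
  simp only [add_sub_cancel_right]
  field_simp
  ring

lemma sphereLIntegral_dipoleKernel_of_norm_eq_one (hE : 2 ≤ finrank ℝ E) {p : E} (hp : ‖p‖ = 1) :
    sphereLIntegral (dipoleKernel p p) =
      ENNReal.ofReal (Cconst (finrank ℝ E) * sphereArea (finrank ℝ E)) := by
  obtain ⟨k, hk⟩ := Nat.exists_eq_add_of_le' (one_le_two.trans hE)
  have : Nonempty (Fin k) := ⟨⟨0, by omega⟩⟩
  have : Nontrivial E := nontrivial_of_finrank_pos (R := ℝ) (by omega)
  let b := WithLp.toLp 2 ((1 : ℝ), (0 : Eu k))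
  have hb : ‖b‖ = 1 := by simp [b]
  obtain ⟨T, hT⟩ := exists_linearIsometryEquiv_apply_eq (F := WithLp 2 (ℝ × Eu k))
    (by rw [finrank_withLp_real_prod, finrank_euclideanSpace_fin, hk]) (hp.trans hb.symm)
  calc sphereLIntegral (dipoleKernel p p) = sphereLIntegral (dipoleKernel b b) := by
        rw [← sphereLIntegral_comp_linearIsometryEquiv (by fun_prop) T, ← hT]
        simp only [dipoleKernel_map]
    _ = 2 * gnomonicLIntegral (dipoleKernel b b) := by
        rw [← sphereLIntegral_indicator_halfSpace (by fun_prop) (dipoleKernel_neg b b)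
          (norm_ne_zero_iff.1 (hb ▸ one_ne_zero)),
          sphereLIntegral_indicator_eq_gnomonicLIntegral (by fun_prop)]
    _ = _ := by
        rw [gnomonicLIntegral_dipoleKernel_self, finrank_euclideanSpace_fin, hk,
          ← two_mul_gnomonicConstant (by omega), ENNReal.ofReal_mul zero_le_two,
          ENNReal.ofReal_ofNat]

lemma sphereLIntegral_dipoleKernel_self (hE : 2 ≤ finrank ℝ E) (p : E) :
    sphereLIntegral (dipoleKernel p p) =
      ENNReal.ofReal (‖p‖ ^ 2) *
        ENNReal.ofReal (Cconst (finrank ℝ E) * sphereArea (finrank ℝ E)) := by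
  rcases eq_or_ne p 0 with rfl | hp
  · simp [sphereLIntegral, dipoleKernel]
  have unit : ‖‖p‖⁻¹ • p‖ = 1 := norm_smul_inv_norm hp
  have p_eq : p = ‖p‖ • ‖p‖⁻¹ • p := by rw [smul_inv_smul₀ (norm_ne_zero_iff.2 hp)]
  conv_lhs => rw [p_eq]
  rw [← sphereLIntegral_dipoleKernel_of_norm_eq_one hE unit, sphereLIntegral, sphereLIntegral,
    ← lintegral_const_mul _ (by fun_prop)]
  simp only [dipoleKernel_smul_self ‖p‖]

variable {l ν : E}

lemma sphereLIntegral_dipoleKernel_le (hE : 2 ≤ finrank ℝ E) (hl : ‖l‖ = 1) (hν : ‖ν‖ = 1) :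
    sphereLIntegral (dipoleKernel l ν) ≤
      ENNReal.ofReal (Cconst (finrank ℝ E) * sphereArea (finrank ℝ E)) := by
  have parallelogram : ‖l + ν‖ ^ 2 + ‖l - ν‖ ^ 2 = 4 := by
    rw [norm_add_sq_real, norm_sub_sq_real, hl, hν]
    ring
  calc sphereLIntegral (dipoleKernel l ν)
      ≤ sphereLIntegral (fun e ↦ ENNReal.ofReal (1 / 4) * dipoleKernel (l + ν) (l + ν) e +
          ENNReal.ofReal (1 / 4) * dipoleKernel (l - ν) (l - ν) e) :=
        lintegral_mono fun e ↦ dipoleKernel_le_add l ν e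
    _ = ENNReal.ofReal (1 / 4) * sphereLIntegral (dipoleKernel (l + ν) (l + ν)) +
          ENNReal.ofReal (1 / 4) * sphereLIntegral (dipoleKernel (l - ν) (l - ν)) := by
        simp only [sphereLIntegral]
        rw [lintegral_add_left (by fun_prop), lintegral_const_mul _ (by fun_prop),
          lintegral_const_mul _ (by fun_prop)]
    _ = _ := by
        rw [sphereLIntegral_dipoleKernel_self hE, sphereLIntegral_dipoleKernel_self hE, ← mul_add,
          ← add_mul, ← ENNReal.ofReal_add (by positivity) (by positivity), parallelogram,
          ← mul_assoc, ← ENNReal.ofReal_mul (by norm_num)]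
        norm_num

lemma two_mul_hemisphere_dipoleKernel_le (hE : 2 ≤ finrank ℝ E) (hl : ‖l‖ = 1) (hν : ‖ν‖ = 1) :
    2 * sphereLIntegral ({z | 0 < ⟪ν, z⟫}.indicator (dipoleKernel l ν)) ≤
      ENNReal.ofReal (Cconst (finrank ℝ E) * sphereArea (finrank ℝ E)) := by
  have hν0 : ν ≠ 0 := norm_ne_zero_iff.1 (hν ▸ one_ne_zero)
  have : Nontrivial E := ⟨ν, 0, hν0⟩
  rw [sphereLIntegral_indicator_halfSpace (by fun_prop) (dipoleKernel_neg l ν) hν0]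
  exact sphereLIntegral_dipoleKernel_le hE hl hν

end DipoleKernel

section Laplacian

open scoped Gradient Laplacian

variable {E F ι : Type*} [NormedAddCommGroup F] [NormedSpace ℝ F]

section NormedSpace

variable [NormedAddCommGroup E] [NormedSpace ℝ E]

lemma differentiableAt_fderiv {f : E → F} {x : E} (hf : ContDiffAt ℝ 2 f x) :
    DifferentiableAt ℝ (fderiv ℝ f) x :=
  (hf.fderiv_right (m := 1) (by norm_num)).differentiableAt (by norm_num)

lemma differentiableAt_fderiv_apply {f : E → F} {x : E} (hf : ContDiffAt ℝ 2 f x) (e : E) :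
    DifferentiableAt ℝ (fun y ↦ fderiv ℝ f y e) x :=
  (differentiableAt_fderiv hf).clm_apply (differentiableAt_const e)

lemma fderiv_comp_real {φ : ℝ → ℝ} {f : E → ℝ} {x : E} (hφ : DifferentiableAt ℝ φ (f x))
    (hf : DifferentiableAt ℝ f x) :
    fderiv ℝ (fun y ↦ φ (f y)) x = deriv φ (f x) • fderiv ℝ f x :=
  (hφ.hasDerivAt.comp_hasFDerivAt x hf.hasFDerivAt).fderiv

lemma fderiv_comp_add_smul (f : E → F) (x : E) (d : ℝ) (z : E) :
    fderiv ℝ (fun z ↦ f (x + d • z)) z = d • fderiv ℝ f (x + d • z) := by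
  rw [fderiv_comp_smul (f := fun y ↦ f (x + y)), fderiv_comp_add_left]

end NormedSpace

variable [NormedAddCommGroup E] [InnerProductSpace ℝ E]

lemma fderiv_inner_add (ν : E) (τ : ℝ) :
    fderiv ℝ (fun z ↦ ⟪ν, z⟫ + τ) = fun _ ↦ innerSL ℝ ν := by
  ext1 z
  rw [fderiv_add_const]
  exact (innerSL ℝ ν).fderiv

lemma contDiff_inner_add (ν : E) (τ : ℝ) : ContDiff ℝ 2 (fun z ↦ ⟪ν, z⟫ + τ) :=
  (innerSL ℝ ν).contDiff.add contDiff_const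

variable [FiniteDimensional ℝ E] [Fintype ι]

lemma laplacian_eq_sum_fderiv_fderiv (b : OrthonormalBasis ι ℝ E) (f : E → F) (x : E) :
    Δ f x = ∑ i, fderiv ℝ (fderiv ℝ f) x (b i) (b i) := by
  rw [laplacian_eq_iteratedFDeriv_orthonormalBasis f b]
  simp [iteratedFDeriv_two_apply]

lemma laplacian_eq_sum_fderiv_fderiv_apply (b : OrthonormalBasis ι ℝ E) {f : E → F} {x : E}
    (hf : ContDiffAt ℝ 2 f x) :
    Δ f x = ∑ i, fderiv ℝ (fun y ↦ fderiv ℝ f y (b i)) x (b i) := by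
  simp_rw [laplacian_eq_sum_fderiv_fderiv b,
    fderiv_clm_apply (differentiableAt_fderiv hf) (differentiableAt_const _)]
  simp

lemma continuous_laplacian {f : E → F} (hf : ContDiff ℝ 2 f) : Continuous (Δ f) := by
  have : Continuous (fderiv ℝ (fderiv ℝ f)) :=
    (hf.fderiv_right (m := 1) (by norm_num)).continuous_fderiv (by norm_num)
  simp_rw [funext (laplacian_eq_sum_fderiv_fderiv (stdOrthonormalBasis ℝ E) f)]
  fun_prop

lemma laplacian_comp_add_smul (f : E → F) (x : E) (d : ℝ) (z : E) :
    Δ (fun z ↦ f (x + d • z)) z = d ^ 2 • Δ f (x + d • z) := by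
  let f' (z : E) : E →L[ℝ] F := fderiv ℝ f (x + d • z)
  have fderiv_eq : fderiv ℝ (fun z ↦ f (x + d • z)) = d • f' := funext (fderiv_comp_add_smul f x d)
  rw [laplacian_eq_sum_fderiv_fderiv (stdOrthonormalBasis ℝ E),
    laplacian_eq_sum_fderiv_fderiv (stdOrthonormalBasis ℝ E), fderiv_eq,
    fderiv_const_smul_field (f := f') d]
  simp [f', fderiv_comp_add_smul, Finset.smul_sum, smul_smul, sq]

lemma sum_fderiv_mul_fderiv (b : OrthonormalBasis ι ℝ E) (f g : E → ℝ) (x : E) :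
    ∑ i, fderiv ℝ f x (b i) * fderiv ℝ g x (b i) = fderiv ℝ g x (∇ f x) := by
  rw [← inner_gradient_left, ← b.sum_inner_mul_inner]
  simp_rw [inner_gradient_left, real_inner_comm (∇ f x), inner_gradient_left, mul_comm]

lemma laplacian_mul {f g : E → ℝ} {x : E} (hf : ContDiffAt ℝ 2 f x) (hg : ContDiffAt ℝ 2 g x) :
    Δ (fun y ↦ f y * g y) x = f x * Δ g x + 2 * fderiv ℝ g x (∇ f x) + g x * Δ f x := by
  have first_derivative (e : E) : (fun y ↦ fderiv ℝ (fun y ↦ f y * g y) y e) =ᶠ[𝓝 x]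
      fun y ↦ f y * fderiv ℝ g y e + g y * fderiv ℝ f y e := by
    filter_upwards [hf.eventually (by simp), hg.eventually (by simp)] with y hfy hgy
    rw [fderiv_fun_mul (hfy.differentiableAt (by norm_num)) (hgy.differentiableAt (by norm_num))]
    rfl
  have hf₁ := hf.differentiableAt (by norm_num)
  have hg₁ := hg.differentiableAt (by norm_num)
  let b := stdOrthonormalBasis ℝ E
  have second_derivative (e : E) : fderiv ℝ (fun y ↦ fderiv ℝ (fun y ↦ f y * g y) y e) x e =
      f x * fderiv ℝ (fun y ↦ fderiv ℝ g y e) x e + 2 * (fderiv ℝ f x e * fderiv ℝ g x e) +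
        g x * fderiv ℝ (fun y ↦ fderiv ℝ f y e) x e := by
    have hf₂ := differentiableAt_fderiv_apply hf e
    have hg₂ := differentiableAt_fderiv_apply hg e
    rw [(first_derivative e).fderiv_eq, fderiv_fun_add (hf₁.fun_mul hg₂) (hg₁.fun_mul hf₂),
      fderiv_fun_mul hf₁ hg₂, fderiv_fun_mul hg₁ hf₂]
    simp only [add_apply, smul_apply, smul_eq_mul]
    ring
  rw [laplacian_eq_sum_fderiv_fderiv_apply b (hf.mul hg), laplacian_eq_sum_fderiv_fderiv_apply b hf,
    laplacian_eq_sum_fderiv_fderiv_apply b hg, ← sum_fderiv_mul_fderiv b]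
  simp_rw [second_derivative, Finset.sum_add_distrib, Finset.mul_sum]

lemma laplacian_comp {φ : ℝ → ℝ} {f : E → ℝ} {x : E} (hφ : ContDiffAt ℝ 2 φ (f x))
    (hf : ContDiffAt ℝ 2 f x) :
    Δ (fun y ↦ φ (f y)) x = deriv (deriv φ) (f x) * ‖∇ f x‖ ^ 2 + deriv φ (f x) * Δ f x := by
  have first_derivative (e : E) : (fun y ↦ fderiv ℝ (fun y ↦ φ (f y)) y e) =ᶠ[𝓝 x]
      fun y ↦ deriv φ (f y) * fderiv ℝ f y e := by
    filter_upwards [hf.eventually (by simp), hf.continuousAt.eventually (hφ.eventually (by simp))]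
      with y hfy hφy
    rw [fderiv_comp_real (hφy.differentiableAt (by norm_num)) (hfy.differentiableAt (by norm_num))]
    rfl
  have hφ' : DifferentiableAt ℝ (deriv φ) (f x) := by
    simpa using differentiableAt_fderiv_apply hφ 1
  have hf₁ := hf.differentiableAt (by norm_num)
  let b := stdOrthonormalBasis ℝ E
  have second_derivative (e : E) : fderiv ℝ (fun y ↦ fderiv ℝ (fun y ↦ φ (f y)) y e) x e =
      deriv (deriv φ) (f x) * (fderiv ℝ f x e * fderiv ℝ f x e) +
        deriv φ (f x) * fderiv ℝ (fun y ↦ fderiv ℝ f y e) x e := by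
    rw [(first_derivative e).fderiv_eq, fderiv_fun_mul (hφ'.fun_comp' x hf₁)
      (differentiableAt_fderiv_apply hf e), fderiv_comp_real hφ' hf₁]
    simp only [add_apply, smul_apply, smul_eq_mul]
    ring
  rw [laplacian_eq_sum_fderiv_fderiv_apply b (f := fun y ↦ φ (f y)) (hφ.comp x hf),
    laplacian_eq_sum_fderiv_fderiv_apply b hf, ← real_inner_self_eq_norm_sq, inner_gradient_left,
    ← sum_fderiv_mul_fderiv b]
  simp_rw [second_derivative, Finset.sum_add_distrib, Finset.mul_sum]

lemma gradient_comp_inner_add {φ : ℝ → ℝ} (ν : E) (τ : ℝ) {z : E}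
    (hφ : DifferentiableAt ℝ φ (⟪ν, z⟫ + τ)) :
    ∇ (fun z ↦ φ (⟪ν, z⟫ + τ)) z = deriv φ (⟪ν, z⟫ + τ) • ν := by
  refine ext_inner_right ℝ fun y ↦ ?_
  rw [inner_gradient_left,
    fderiv_comp_real (f := fun z ↦ ⟪ν, z⟫ + τ) hφ
      ((contDiff_inner_add ν τ).differentiable (by norm_num) z),
    fderiv_inner_add, smul_apply, innerSL_apply_apply, real_inner_smul_left, smul_eq_mul]

lemma laplacian_comp_inner_add {φ : ℝ → ℝ} (hφ : ContDiff ℝ 2 φ) (ν : E) (τ : ℝ) (z : E) :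
    Δ (fun z ↦ φ (⟪ν, z⟫ + τ)) z = deriv (deriv φ) (⟪ν, z⟫ + τ) * ‖ν‖ ^ 2 := by
  have gradient_eq : ∇ (fun z ↦ ⟪ν, z⟫ + τ) z = ν := by
    simpa using gradient_comp_inner_add (φ := id) ν τ differentiableAt_id
  rw [laplacian_comp hφ.contDiffAt (contDiff_inner_add ν τ).contDiffAt, gradient_eq,
    laplacian_eq_sum_fderiv_fderiv (stdOrthonormalBasis ℝ E), fderiv_inner_add]
  simp

lemma laplacian_comp_norm_sq {q : ℝ → ℝ} (hq : ContDiff ℝ 2 q) (z : E) :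
    Δ (fun z : E ↦ q (‖z‖ ^ 2)) z =
      4 * ‖z‖ ^ 2 * deriv (deriv q) (‖z‖ ^ 2) + 2 * finrank ℝ E * deriv q (‖z‖ ^ 2) := by
  have fderiv_sq : fderiv ℝ (fun z : E ↦ ‖z‖ ^ 2) = fun z ↦ (2 : ℝ) • innerSL ℝ z := by
    ext z : 1
    rw [fderiv_norm_sq_apply, two_smul, two_smul]
  have gradient_sq : ∇ (fun z : E ↦ ‖z‖ ^ 2) z = (2 : ℝ) • z := by
    refine ext_inner_right ℝ fun y ↦ ?_
    rw [inner_gradient_left, fderiv_sq, smul_apply, innerSL_apply_apply, real_inner_smul_left,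
      smul_eq_mul]
  have laplacian_sq : Δ (fun z : E ↦ ‖z‖ ^ 2) z = 2 * finrank ℝ E := by
    rw [laplacian_eq_sum_fderiv_fderiv (stdOrthonormalBasis ℝ E), fderiv_sq,
      ((innerSL ℝ (E := E)).hasFDerivAt.fun_const_smul (2 : ℝ)).fderiv]
    change ∑ i, (2 : ℝ) • ⟪stdOrthonormalBasis ℝ E i, stdOrthonormalBasis ℝ E i⟫ = _
    simp [mul_comm]
  rw [laplacian_comp hq.contDiffAt (contDiff_norm_sq ℝ).contDiffAt, gradient_sq, laplacian_sq,
    norm_smul]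
  norm_num
  ring

section Green

variable [MeasurableSpace E] [BorelSpace E] (μ : Measure E) [μ.IsAddHaarMeasure]

lemma integral_mul_fderiv_of_hasCompactSupport {f g : E → ℝ} (hf : ContDiff ℝ 1 f)
    (hg : ContDiff ℝ 1 g) (hgc : HasCompactSupport g) (e : E) :
    ∫ x, f x * fderiv ℝ g x e ∂μ = -∫ x, fderiv ℝ f x e * g x ∂μ := by
  have hf' : Continuous (fun x ↦ fderiv ℝ f x e) := by fun_prop
  have hg' : Continuous (fun x ↦ fderiv ℝ g x e) := by fun_prop
  refine integral_mul_fderiv_eq_neg_fderiv_mul_of_integrable ?_ ?_ ?_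
    (fun x _ ↦ hf.differentiable one_ne_zero x) (fun x _ ↦ hg.differentiable one_ne_zero x)
  · exact (hf'.mul hg.continuous).integrable_of_hasCompactSupport hgc.mul_left
  · exact (hf.continuous.mul hg').integrable_of_hasCompactSupport (hgc.fderiv_apply ℝ e).mul_left
  · exact (hf.continuous.mul hg.continuous).integrable_of_hasCompactSupport hgc.mul_left

lemma integral_mul_laplacian_comm {f g : E → ℝ} (hf : ContDiff ℝ 2 f) (hg : ContDiff ℝ 2 g)
    (hgc : HasCompactSupport g) : ∫ x, f x * Δ g x ∂μ = ∫ x, Δ f x * g x ∂μ := by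
  let b := stdOrthonormalBasis ℝ E
  have contDiff_fderiv {h : E → ℝ} (hh : ContDiff ℝ 2 h) (e : E) :
      ContDiff ℝ 1 (fun x ↦ fderiv ℝ h x e) :=
    (hh.fderiv_right (by norm_num)).clm_apply contDiff_const
  have by_parts (e : E) : ∫ x, f x * fderiv ℝ (fun y ↦ fderiv ℝ g y e) x e ∂μ =
      ∫ x, fderiv ℝ (fun y ↦ fderiv ℝ f y e) x e * g x ∂μ := by
    rw [integral_mul_fderiv_of_hasCompactSupport μ (hf.of_le (by norm_num)) (contDiff_fderiv hg e)
      (hgc.fderiv_apply ℝ e), integral_mul_fderiv_of_hasCompactSupport μ (contDiff_fderiv hf e)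
      (hg.of_le (by norm_num)) hgc, neg_neg]
  simp_rw [laplacian_eq_sum_fderiv_fderiv_apply b hf.contDiffAt,
    laplacian_eq_sum_fderiv_fderiv_apply b hg.contDiffAt, Finset.mul_sum, Finset.sum_mul]
  rw [integral_finsetSum, integral_finsetSum]
  · exact Finset.sum_congr rfl fun i _ ↦ by_parts (b i)
  · intro i _
    have := (contDiff_fderiv hf (b i)).continuous_fderiv one_ne_zero
    exact Continuous.integrable_of_hasCompactSupport (by fun_prop) hgc.mul_left
  · intro i _
    have := (contDiff_fderiv hg (b i)).continuous_fderiv one_ne_zero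
    exact Continuous.integrable_of_hasCompactSupport (by fun_prop)
      ((hgc.fderiv_apply ℝ _).fderiv_apply ℝ _).mul_left

end Green

end Laplacian

section Reflection

open scoped Gradient Laplacian

lemma integrable_uncurry_restrict_uIoc_prod {X : Type*} [TopologicalSpace X] [MeasurableSpace X]
    [OpensMeasurableSpace X] [SecondCountableTopology X] [T2Space X] {μ : Measure X} [SFinite μ]
    [IsFiniteMeasureOnCompacts μ] {f : ℝ → X → ℝ} (hf : Continuous f.uncurry) {K : Set X}
    (hK : IsCompact K) {a b : ℝ} (hfK : ∀ τ ∈ uIoc a b, ∀ x ∉ K, f τ x = 0) :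
    Integrable f.uncurry ((volume.restrict (uIoc a b)).prod μ) := by
  rw [← Measure.restrict_univ (μ := μ), Measure.prod_restrict]
  refine IntegrableOn.of_forall_sdiff_eq_zero (s := uIcc a b ×ˢ K)
    (hf.continuousOn.integrableOn_compact (isCompact_uIcc.prod hK)) ?_ ?_
  · exact measurableSet_uIoc.prod .univ
  · rintro ⟨τ, x⟩ ⟨hτ, hx⟩
    exact hfK τ hτ.1 x fun hxK ↦ hx ⟨uIoc_subset_uIcc hτ.1, hxK⟩

variable {E : Type*} [NormedAddCommGroup E] [InnerProductSpace ℝ E]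

/-- The odd reflection of `B`, localized by a cutoff `φ`. If `⟪ν, z⟫ + τ = σ` then `z + 2τν` is the
mirror image of `z` in the hyperplane `⟪ν, ·⟫ = σ`, so integrating in `τ` averages the odd
reflections of `B` in these hyperplanes against the weight `φ σ`. -/
def oddReflection (φ : ℝ → ℝ) (B : E → ℝ) (ν : E) (τ : ℝ) (z : E) : ℝ :=
  φ (⟪ν, z⟫ + τ) * (B z - B (z + (2 * τ) • ν))

variable {φ : ℝ → ℝ} {B : E → ℝ} {ν : E} {M T τ : ℝ}

lemma contDiff_oddReflection (hφ : ContDiff ℝ 2 φ) (hB : ContDiff ℝ 2 B) (ν : E) (τ : ℝ) :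
    ContDiff ℝ 2 (oddReflection φ B ν τ) := by
  have hν : ContDiff ℝ 2 (fun z ↦ ⟪ν, z⟫) := (innerSL ℝ ν).contDiff
  unfold oddReflection
  fun_prop

lemma inner_le_one_of_oddReflection_ne_zero (hφ : tsupport φ ⊆ Icc 0 1) (hτ : 0 ≤ τ) {z : E}
    (hz : oddReflection φ B ν τ z ≠ 0) : ⟪ν, z⟫ ≤ 1 := by
  linarith [(hφ (subset_tsupport φ (left_ne_zero_of_mul hz))).2]

lemma support_oddReflection_subset (hB : tsupport B ⊆ closedBall 0 M) (hν : ‖ν‖ = 1)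
    (hτ : 0 ≤ τ) : Function.support (oddReflection φ B ν τ) ⊆ closedBall 0 (M + 2 * τ) := by
  intro z hz
  have hBM {y : E} (hy : B y ≠ 0) : ‖y‖ ≤ M := by simpa using hB (subset_tsupport B hy)
  have h2τ : ‖(2 * τ) • ν‖ = 2 * τ := by
    rw [norm_smul, hν, mul_one, Real.norm_of_nonneg (by positivity)]
  rw [mem_closedBall_zero_iff]
  by_cases hBz : B z = 0
  · have hBz' : B (z + (2 * τ) • ν) ≠ 0 := by
      simpa [hBz] using right_ne_zero_of_mul hz
    linarith [hBM hBz', norm_sub_le_norm_add z ((2 * τ) • ν)]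
  · linarith [hBM hBz]

variable [FiniteDimensional ℝ E]

lemma laplacian_oddReflection (hφ : ContDiff ℝ 2 φ) (hB : ContDiff ℝ 2 B) (hν : ‖ν‖ = 1) (τ : ℝ)
    (z : E) : Δ (oddReflection φ B ν τ) z =
      deriv (deriv φ) (⟪ν, z⟫ + τ) * (B z - B (z + (2 * τ) • ν)) +
        2 * deriv φ (⟪ν, z⟫ + τ) * (fderiv ℝ B z ν - fderiv ℝ B (z + (2 * τ) • ν) ν) +
        φ (⟪ν, z⟫ + τ) * (Δ B z - Δ B (z + (2 * τ) • ν)) := by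
  have hcut : ContDiff ℝ 2 (fun z ↦ φ (⟪ν, z⟫ + τ)) :=
    hφ.comp (contDiff_inner_add ν τ)
  have htrans : ContDiff ℝ 2 (fun z ↦ B (z + (2 * τ) • ν)) := by fun_prop
  have gradient_cut : ∇ (fun z ↦ φ (⟪ν, z⟫ + τ)) z = deriv φ (⟪ν, z⟫ + τ) • ν :=
    gradient_comp_inner_add ν τ (hφ.differentiable (by norm_num) _)
  have laplacian_trans : Δ (fun z ↦ B (z + (2 * τ) • ν)) z = Δ B (z + (2 * τ) • ν) := by
    simpa [add_comm] using laplacian_comp_add_smul B ((2 * τ) • ν) 1 z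
  have laplacian_diff :
      Δ (fun z ↦ B z - B (z + (2 * τ) • ν)) z = Δ B z - Δ B (z + (2 * τ) • ν) := by
    rw [← laplacian_trans]
    exact hB.contDiffAt.laplacian_sub htrans.contDiffAt
  unfold oddReflection
  rw [laplacian_mul hcut.contDiffAt (hB.sub htrans).contDiffAt, gradient_cut,
    laplacian_comp_inner_add hφ, laplacian_diff, fderiv_fun_sub (hB.differentiable (by norm_num) _)
    (htrans.differentiable (by norm_num) _), fderiv_comp_add_right]
  simp only [hν, map_smul, sub_apply, smul_eq_mul]
  ring

/-- The source term of `∫ τ in 0..T, oddReflection φ B ν τ`: the part of its Laplacian that comes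
from `Δ B`, without the terms in which derivatives fall on the cutoff `φ`. -/
def reflectedSource (φ : ℝ → ℝ) (B : E → ℝ) (ν : E) (T : ℝ) (z : E) : ℝ :=
  ∫ τ in 0..T, φ (⟪ν, z⟫ + τ) * (Δ B z - Δ B (z + (2 * τ) • ν))

-- The terms of `Δ (oddReflection φ B ν τ)` containing derivatives of `φ` add up to
-- `∂_τ (φ' (⟪ν, z⟫ + τ) (B z - B (z + 2τν))) + 2 ∂_τ (φ (⟪ν, z⟫ + τ)) ∂_ν B z`.
lemma intervalIntegral_laplacian_oddReflection (hφ : ContDiff ℝ 2 φ) (hB : ContDiff ℝ 2 B)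
    (hν : ‖ν‖ = 1) (T : ℝ) (z : E) :
    ∫ τ in 0..T, Δ (oddReflection φ B ν τ) z =
      deriv φ (⟪ν, z⟫ + T) * (B z - B (z + (2 * T) • ν)) +
        2 * (φ (⟪ν, z⟫ + T) - φ ⟪ν, z⟫) * fderiv ℝ B z ν + reflectedSource φ B ν T z := by
  let W (τ : ℝ) : ℝ := deriv φ (⟪ν, z⟫ + τ) * (B z - B (z + (2 * τ) • ν)) +
    2 * φ (⟪ν, z⟫ + τ) * fderiv ℝ B z ν
  let W' (τ : ℝ) : ℝ := deriv (deriv φ) (⟪ν, z⟫ + τ) * (B z - B (z + (2 * τ) • ν)) +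
    2 * deriv φ (⟪ν, z⟫ + τ) * (fderiv ℝ B z ν - fderiv ℝ B (z + (2 * τ) • ν) ν)
  have hφ' : ContDiff ℝ 1 (deriv φ) := hφ.iterate_deriv' 1 1
  have : Continuous (deriv (deriv φ)) := hφ'.continuous_deriv le_rfl
  have hB' : Continuous (fderiv ℝ B) := hB.continuous_fderiv (by norm_num)
  have hΔB : Continuous (Δ B) := continuous_laplacian hB
  have hφc := hφ.continuous
  have hφc' := hφ'.continuous
  have hBc := hB.continuous
  have hasDerivAt_W (τ : ℝ) : HasDerivAt W (W' τ) τ := by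
    have h₁ := ((hφ.differentiable (by norm_num) _).hasDerivAt.comp_const_add ⟪ν, z⟫ τ)
    have h₂ := ((hφ'.differentiable one_ne_zero _).hasDerivAt.comp_const_add ⟪ν, z⟫ τ)
    have h₃ := (hB.differentiable (by norm_num) _).hasFDerivAt.comp_hasDerivAt τ
      ((((hasDerivAt_id τ).const_mul 2).smul_const ν).const_add z)
    refine ((h₂.mul (h₃.const_sub (B z))).add ((h₁.const_mul 2).mul_const _)).congr_deriv ?_
    simp only [id_eq, Function.comp_apply, mul_one, map_smul, smul_eq_mul, mul_neg, W']
    ring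
  have integral_W' : ∫ τ in 0..T, W' τ = W T - W 0 :=
    intervalIntegral.integral_eq_sub_of_hasDerivAt (fun τ _ ↦ hasDerivAt_W τ)
      (Continuous.intervalIntegrable (by fun_prop) _ _)
  simp_rw [laplacian_oddReflection hφ hB hν]
  rw [intervalIntegral.integral_add (Continuous.intervalIntegrable (by fun_prop) _ _)
    (Continuous.intervalIntegrable (by fun_prop) _ _), integral_W', reflectedSource]
  simp only [add_zero, mul_zero, zero_smul, sub_self, zero_add, add_left_inj, W]
  ring

lemma intervalIntegral_laplacian_oddReflection_of_tsupport_subset (hφ : ContDiff ℝ 2 φ)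
    (hφs : tsupport φ ⊆ Icc 0 1) (hB : ContDiff ℝ 2 B) (hBs : tsupport B ⊆ closedBall 0 M)
    (hν : ‖ν‖ = 1) (hT : M + 2 ≤ T) (z : E) :
    ∫ τ in 0..T, Δ (oddReflection φ B ν τ) z =
      reflectedSource φ B ν T z - 2 * (φ ⟪ν, z⟫ * fderiv ℝ B z ν) := by
  have inner_le {y : E} (hy : y ∈ tsupport B) : |⟪ν, y⟫| ≤ M :=
    (abs_real_inner_le_norm ν y).trans (by simpa [hν] using hBs hy)
  have hφT {y : E} (hy : y ∈ tsupport B) (h : y = z ∨ y = z + (2 * T) • ν) :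
      ⟪ν, z⟫ + T ∉ tsupport φ := by
    intro hmem
    have := abs_le.1 (inner_le hy)
    rcases h with rfl | rfl
    · linarith [(hφs hmem).2]
    · rw [inner_add_right, real_inner_smul_right, real_inner_self_eq_norm_sq, hν] at this
      linarith [(hφs hmem).1]
  have boundary_term : deriv φ (⟪ν, z⟫ + T) * (B z - B (z + (2 * T) • ν)) = 0 := by
    by_cases h : ⟪ν, z⟫ + T ∈ tsupport φ
    · rw [image_eq_zero_of_notMem_tsupport fun hz ↦ hφT hz (.inl rfl) h,
        image_eq_zero_of_notMem_tsupport fun hz ↦ hφT hz (.inr rfl) h, sub_zero, mul_zero]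
    · rw [image_eq_zero_of_notMem_tsupport fun h' ↦ h (tsupport_deriv_subset h'), zero_mul]
  have top_term : φ (⟪ν, z⟫ + T) * fderiv ℝ B z ν = 0 := by
    by_cases h : z ∈ tsupport B
    · rw [image_eq_zero_of_notMem_tsupport (hφT h (.inl rfl)), zero_mul]
    · rw [image_eq_zero_of_notMem_tsupport fun h' ↦ h (tsupport_fderiv_subset ℝ h'), zero_apply,
        mul_zero]
  rw [intervalIntegral_laplacian_oddReflection hφ hB hν, boundary_term]
  linear_combination 2 * top_term

lemma reflectedSource_sub {B₁ B₂ : E → ℝ} (hφ : Continuous φ) (hB₁ : ContDiff ℝ 2 B₁)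
    (hB₂ : ContDiff ℝ 2 B₂) (ν : E) (T : ℝ) (z : E) :
    reflectedSource φ (B₁ - B₂) ν T z =
      reflectedSource φ B₁ ν T z - reflectedSource φ B₂ ν T z := by
  have laplacian_sub (z : E) : Δ (B₁ - B₂) z = Δ B₁ z - Δ B₂ z :=
    hB₁.contDiffAt.laplacian_sub hB₂.contDiffAt
  have hΔB₁ := continuous_laplacian hB₁
  have hΔB₂ := continuous_laplacian hB₂
  simp only [reflectedSource]
  rw [← intervalIntegral.integral_sub (Continuous.intervalIntegrable (by fun_prop) _ _)
    (Continuous.intervalIntegrable (by fun_prop) _ _)]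
  congr 1 with τ
  rw [laplacian_sub, laplacian_sub]
  ring

lemma reflectedSource_eq_laplacian {a : ℝ} (hφs : tsupport φ ⊆ Ioc a 1) (hφi : ∫ σ, φ σ = 1)
    (hB : ∀ z, a < ‖z‖ → Δ B z = 0) (hν : ‖ν‖ = 1) (hT₀ : 0 ≤ T) (hT : 1 + a ≤ T) :
    reflectedSource φ B ν T = Δ B := by
  ext z
  have mirror_term {τ : ℝ} (hτ : 0 ≤ τ) : φ (⟪ν, z⟫ + τ) * Δ B (z + (2 * τ) • ν) = 0 := by
    by_contra h
    obtain ⟨hφ, hΔ⟩ := mul_ne_zero_iff.1 h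
    have norm_le : ‖z + (2 * τ) • ν‖ ≤ a := not_lt.1 fun h ↦ hΔ (hB _ h)
    have inner_eq : ⟪ν, z + (2 * τ) • ν⟫ = ⟪ν, z⟫ + 2 * τ := by
      rw [inner_add_right, real_inner_smul_right, real_inner_self_eq_norm_sq, hν]
      ring
    have inner_le := real_inner_le_norm ν (z + (2 * τ) • ν)
    rw [inner_eq, hν] at inner_le
    linarith [(hφs (subset_tsupport φ hφ)).1]
  have mass (hz : ‖z‖ ≤ a) : ∫ τ in 0..T, φ (⟪ν, z⟫ + τ) = 1 := by
    have inner_le : |⟪ν, z⟫| ≤ a := (abs_real_inner_le_norm ν z).trans (by simpa [hν] using hz)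
    rw [abs_le] at inner_le
    rw [intervalIntegral.integral_comp_add_left, add_zero,
      intervalIntegral.integral_of_le (by linarith),
      setIntegral_eq_integral_of_forall_compl_eq_zero, hφi]
    refine fun σ hσ ↦ image_eq_zero_of_notMem_tsupport fun h ↦ hσ ?_
    exact ⟨by linarith [(hφs h).1], by linarith [(hφs h).2]⟩
  calc reflectedSource φ B ν T z = ∫ τ in 0..T, φ (⟪ν, z⟫ + τ) * Δ B z :=
        intervalIntegral.integral_congr fun τ hτ ↦ by
          rw [uIcc_of_le hT₀] at hτ
          simp only [mul_sub, mirror_term hτ.1, sub_zero]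
    _ = (∫ τ in 0..T, φ (⟪ν, z⟫ + τ)) * Δ B z := intervalIntegral.integral_mul_const _ _
    _ = Δ B z := by
      rcases le_or_gt ‖z‖ a with hz | hz
      · rw [mass hz, one_mul]
      · rw [hB z hz, mul_zero]

section Measure

variable [MeasurableSpace E] [BorelSpace E]

lemma lintegral_enorm_reflectedSource_le (hφ : Continuous φ) (hB : ContDiff ℝ 2 B) (hν : ‖ν‖ = 1)
    (hT : 0 ≤ T) :
    ∫⁻ z, ‖reflectedSource φ B ν T z‖ₑ ≤ 2 * (∫⁻ σ, ‖φ σ‖ₑ) * ∫⁻ z, ‖Δ B z‖ₑ := by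
  have hφm := hφ.measurable
  have hΔB := continuous_laplacian hB
  have direct_term : ∫⁻ z, ∫⁻ τ, ‖φ (⟪ν, z⟫ + τ)‖ₑ * ‖Δ B z‖ₑ =
      (∫⁻ σ, ‖φ σ‖ₑ) * ∫⁻ z, ‖Δ B z‖ₑ := by
    rw [← lintegral_const_mul _ (by fun_prop)]
    congr 1 with z
    rw [lintegral_mul_const _ (by fun_prop), lintegral_add_left_eq_self (fun σ ↦ ‖φ σ‖ₑ)]
  have mirror_term : ∫⁻ z, ∫⁻ τ, ‖φ (⟪ν, z⟫ + τ)‖ₑ * ‖Δ B (z + (2 * τ) • ν)‖ₑ =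
      (∫⁻ σ, ‖φ σ‖ₑ) * ∫⁻ z, ‖Δ B z‖ₑ := by
    have translate (τ : ℝ) : ∫⁻ z, ‖φ (⟪ν, z⟫ + τ)‖ₑ * ‖Δ B (z + (2 * τ) • ν)‖ₑ =
        ∫⁻ z, ‖φ (⟪ν, z⟫ - τ)‖ₑ * ‖Δ B z‖ₑ := by
      rw [← lintegral_add_right_eq_self (fun z ↦ ‖φ (⟪ν, z⟫ - τ)‖ₑ * ‖Δ B z‖ₑ) ((2 * τ) • ν)]
      congr 1 with z
      rw [inner_add_right, real_inner_smul_right, real_inner_self_eq_norm_sq, hν]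
      ring_nf
    rw [lintegral_lintegral_swap (by fun_prop)]
    simp_rw [translate]
    rw [lintegral_lintegral_swap (by fun_prop), ← lintegral_const_mul _ (by fun_prop)]
    congr 1 with z
    rw [lintegral_mul_const _ (by fun_prop), lintegral_sub_left_eq_self (fun σ ↦ ‖φ σ‖ₑ)]
  calc ∫⁻ z, ‖reflectedSource φ B ν T z‖ₑ
      ≤ ∫⁻ z, ∫⁻ τ, (‖φ (⟪ν, z⟫ + τ)‖ₑ * ‖Δ B z‖ₑ +
          ‖φ (⟪ν, z⟫ + τ)‖ₑ * ‖Δ B (z + (2 * τ) • ν)‖ₑ) := by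
        refine lintegral_mono fun z ↦ ?_
        rw [reflectedSource, intervalIntegral.integral_of_le hT]
        refine (enorm_integral_le_lintegral_enorm _).trans
          ((setLIntegral_le_lintegral _ _).trans (lintegral_mono fun τ ↦ ?_))
        rw [enorm_mul, ← mul_add]
        gcongr
        exact enorm_sub_le
    _ = 2 * (∫⁻ σ, ‖φ σ‖ₑ) * ∫⁻ z, ‖Δ B z‖ₑ := by
        have (z : E) := lintegral_add_left (μ := volume)
          (f := fun τ ↦ ‖φ (⟪ν, z⟫ + τ)‖ₑ * ‖Δ B z‖ₑ) (by fun_prop)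
          (fun τ ↦ ‖φ (⟪ν, z⟫ + τ)‖ₑ * ‖Δ B (z + (2 * τ) • ν)‖ₑ)
        simp_rw [this]
        rw [lintegral_add_left (by fun_prop), direct_term, mirror_term, mul_assoc, two_mul]

lemma integrable_mul_laplacian_oddReflection (hφ : ContDiff ℝ 2 φ) (hB : ContDiff ℝ 2 B)
    (hBs : tsupport B ⊆ closedBall 0 M) (hν : ‖ν‖ = 1) (hT : 0 ≤ T) {v : E → ℝ}
    (hv : Continuous v) :
    Integrable (fun τ z ↦ v z * Δ (oddReflection φ B ν τ) z).uncurry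
      ((volume.restrict (uIoc 0 T)).prod volume) := by
  refine integrable_uncurry_restrict_uIoc_prod ?_ (isCompact_closedBall (0 : E) (M + 2 * T)) ?_
  · have hφ' : ContDiff ℝ 1 (deriv φ) := hφ.iterate_deriv' 1 1
    have : Continuous (deriv (deriv φ)) := hφ'.continuous_deriv le_rfl
    have hB' : Continuous (fderiv ℝ B) := hB.continuous_fderiv (by norm_num)
    have hΔB : Continuous (Δ B) := continuous_laplacian hB
    simp_rw [laplacian_oddReflection hφ hB hν]
    fun_prop
  · intro τ hτ z hz
    rw [uIoc_of_le hT] at hτ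
    have tsupport_subset := closure_minimal
      (support_oddReflection_subset (φ := φ) hBs hν hτ.1.le) isClosed_closedBall
    have hz' : z ∉ tsupport (oddReflection φ B ν τ) := fun h ↦
      hz (closedBall_subset_closedBall (by linarith [hτ.2]) (tsupport_subset h))
    have laplacian_eq := (laplacian_congr_nhds (notMem_tsupport_iff_eventuallyEq.1 hz')).eq_of_nhds
    simp [laplacian_eq, laplacian_eq_sum_fderiv_fderiv (stdOrthonormalBasis ℝ E)]

lemma integral_mul_reflectedSource_sub_eq_zero (hφ : ContDiff ℝ 2 φ) (hφs : tsupport φ ⊆ Icc 0 1)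
    (hB : ContDiff ℝ 2 B) (hBs : tsupport B ⊆ closedBall 0 M) (hν : ‖ν‖ = 1) (hT₀ : 0 ≤ T)
    (hT : M + 2 ≤ T) {v : E → ℝ} (hv : ContDiff ℝ 2 v)
    (hΔv : ∀ z, ⟪ν, z⟫ ≤ 1 → ‖z‖ ≤ M + 2 * T → Δ v z = 0) :
    Integrable (fun z ↦ v z * (reflectedSource φ B ν T z - 2 * (φ ⟪ν, z⟫ * fderiv ℝ B z ν))) ∧
      ∫ z, v z * (reflectedSource φ B ν T z - 2 * (φ ⟪ν, z⟫ * fderiv ℝ B z ν)) = 0 := by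
  have integrable_prod := integrable_mul_laplacian_oddReflection hφ hB hBs hν hT₀ hv.continuous
  have green (τ : ℝ) (hτ : τ ∈ uIcc 0 T) : ∫ z, v z * Δ (oddReflection φ B ν τ) z = 0 := by
    rw [uIcc_of_le hT₀] at hτ
    have support_subset := support_oddReflection_subset (φ := φ) hBs hν hτ.1
    rw [integral_mul_laplacian_comm volume hv (contDiff_oddReflection hφ hB ν τ)
      (.of_support_subset_isCompact (isCompact_closedBall _ _) support_subset)]
    refine integral_eq_zero_of_ae (.of_forall fun z ↦ ?_)
    by_cases hz : oddReflection φ B ν τ z = 0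
    · simp [hz]
    · have hzM : ‖z‖ ≤ M + 2 * τ := by simpa using support_subset hz
      simp [hΔv z (inner_le_one_of_oddReflection_ne_zero hφs hτ.1 hz) (by linarith [hτ.2])]
  simp_rw [← intervalIntegral_laplacian_oddReflection_of_tsupport_subset hφ hφs hB hBs hν hT,
    ← intervalIntegral.integral_const_mul]
  constructor
  · simpa [intervalIntegral.integral_of_le hT₀, uIoc_of_le hT₀] using
      integrable_prod.integral_prod_right
  · rw [← intervalIntegral_integral_swap integrable_prod, intervalIntegral.integral_congr green]
    simp

-- On the support of `φ` the dipole `B₁` is corrected by its odd reflections, which leaves only a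
-- single layer there; `B₂` agrees with `B₁` far away and makes the difference compactly supported.
lemma enorm_integral_mul_laplacian_le {a : ℝ} {B₁ B₂ : E → ℝ} (ha : 0 ≤ a) (hφ : ContDiff ℝ 2 φ)
    (hφs : tsupport φ ⊆ Ioc a 1) (hφi : ∫ σ, φ σ = 1) (hB₁ : ContDiff ℝ 2 B₁)
    (hΔB₁ : ∀ z, a < ‖z‖ → Δ B₁ z = 0) (hB₂ : ContDiff ℝ 2 B₂) (hM : 0 ≤ M)
    (hBs : tsupport (B₁ - B₂) ⊆ closedBall 0 M) (hν : ‖ν‖ = 1) {v : E → ℝ} (hv : ContDiff ℝ 2 v)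
    (hv₁ : ∀ z, |v z| ≤ 1) (hΔv : ∀ z, ⟪ν, z⟫ ≤ 1 → ‖z‖ ≤ 3 * M + 2 * a + 4 → Δ v z = 0) :
    ‖∫ z, v z * Δ B₁ z‖ₑ ≤ 2 * (∫⁻ σ, ‖φ σ‖ₑ) * (∫⁻ z, ‖Δ B₂ z‖ₑ) +
      2 * ∫⁻ z, ‖φ ⟪ν, z⟫‖ₑ * ‖fderiv ℝ (B₁ - B₂) z ν‖ₑ := by
  let T := M + a + 2
  let g (z : E) : ℝ :=
    v z * (reflectedSource φ (B₁ - B₂) ν T z - 2 * (φ ⟪ν, z⟫ * fderiv ℝ (B₁ - B₂) z ν))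
  obtain ⟨g_integrable, integral_g⟩ : Integrable g ∧ ∫ z, g z = 0 :=
    integral_mul_reflectedSource_sub_eq_zero (T := T) hφ
      (hφs.trans (Ioc_subset_Icc_self.trans (Icc_subset_Icc_left ha))) (hB₁.sub hB₂) hBs hν
      (by positivity) (by simp only [T]; linarith) hv
      fun z hz hzM ↦ hΔv z hz (by simp only [T] at hzM; linarith)
  have f_integrable : Integrable (fun z ↦ v z * Δ B₁ z) := by
    refine (hv.continuous.mul (continuous_laplacian hB₁)).integrable_of_hasCompactSupport
      (.of_support_subset_isCompact (isCompact_closedBall 0 a) fun z hz ↦ ?_)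
    rw [mem_closedBall_zero_iff]
    exact not_lt.1 fun h ↦ right_ne_zero_of_mul hz (hΔB₁ z h)
  have sub_eq (z : E) : v z * Δ B₁ z - g z = v z * (reflectedSource φ B₂ ν T z +
      2 * (φ ⟪ν, z⟫ * fderiv ℝ (B₁ - B₂) z ν)) := by
    simp only [g, reflectedSource_sub hφ.continuous hB₁ hB₂, reflectedSource_eq_laplacian hφs hφi
      hΔB₁ hν (by positivity : 0 ≤ T) (by simp only [T]; linarith)]
    ring
  have enorm_two : ‖(2 : ℝ)‖ₑ = 2 := by simp [← ofReal_norm]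
  have hφm := hφ.continuous.measurable
  calc ‖∫ z, v z * Δ B₁ z‖ₑ = ‖∫ z, (v z * Δ B₁ z - g z)‖ₑ := by
        rw [integral_sub f_integrable g_integrable, integral_g, sub_zero]
    _ ≤ ∫⁻ z, ‖v z * Δ B₁ z - g z‖ₑ := enorm_integral_le_lintegral_enorm _
    _ ≤ ∫⁻ z, (‖reflectedSource φ B₂ ν T z‖ₑ +
          2 * (‖φ ⟪ν, z⟫‖ₑ * ‖fderiv ℝ (B₁ - B₂) z ν‖ₑ)) := by
        refine lintegral_mono fun z ↦ ?_
        have hvz : ‖v z‖ₑ ≤ 1 := by simpa [Real.enorm_eq_ofReal_abs] using hv₁ z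
        rw [sub_eq, enorm_mul]
        refine (mul_le_of_le_one_left' hvz).trans ((enorm_add_le (E := ℝ) _ _).trans_eq ?_)
        rw [enorm_mul, enorm_mul, enorm_two]
    _ ≤ _ := by
        rw [lintegral_add_right _ (by fun_prop), lintegral_const_mul _ (by fun_prop)]
        gcongr
        exact lintegral_enorm_reflectedSource_le hφ.continuous hB₂ hν (by positivity)

end Measure

end Reflection

section Dipole

open scoped ContDiff Gradient Laplacian

section Profile

/-- A smooth function agreeing with `s ^ (-n / 2)` for `1 ≤ s`; it makes `⟪l, z⟫ * q (‖z‖ ^ 2)` a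
smooth function agreeing with the dipole field `⟪l, z⟫ / ‖z‖ ^ n` outside the unit ball. -/
def dipoleProfile (n : ℕ) (s : ℝ) : ℝ :=
  Real.smoothTransition (2 * s - 1) * s ^ (-(n : ℝ) / 2)

/-- The radial profile of `div (q (‖z‖ ^ 2) z)` in dimension `n`, where `q = dipoleProfile n`. -/
def sourceProfile (n : ℕ) (s : ℝ) : ℝ :=
  n * dipoleProfile n s + 2 * s * deriv (dipoleProfile n) s

variable {n : ℕ} {s : ℝ}

lemma dipoleProfile_of_one_le (hs : 1 ≤ s) : dipoleProfile n s = s ^ (-(n : ℝ) / 2) := by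
  rw [dipoleProfile, Real.smoothTransition.one_of_one_le (by linarith), one_mul]

lemma dipoleProfile_sq {t : ℝ} (ht : 1 ≤ t) : dipoleProfile n (t ^ 2) = (t ^ n)⁻¹ := by
  rw [dipoleProfile_of_one_le (one_le_pow₀ ht), ← Real.rpow_natCast_mul (by positivity),
    ← Real.rpow_natCast, ← Real.rpow_neg (by positivity)]
  push_cast
  ring_nf

lemma contDiff_dipoleProfile : ContDiff ℝ ∞ (dipoleProfile n) := by
  refine contDiff_iff_contDiffAt.2 fun s ↦ ?_
  rcases lt_or_ge s (1 / 2) with hs | hs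
  · refine (contDiffAt_const (c := 0)).congr_of_eventuallyEq ?_
    filter_upwards [gt_mem_nhds hs] with t ht
    rw [dipoleProfile, Real.smoothTransition.zero_of_nonpos (by linarith), zero_mul]
  · exact (Real.smoothTransition.contDiff.comp (by fun_prop)).contDiffAt.mul
      (Real.contDiffAt_rpow_const_of_ne (by positivity))

lemma mul_deriv_dipoleProfile (hs : 1 < s) :
    s * deriv (dipoleProfile n) s = -(n : ℝ) / 2 * dipoleProfile n s := by
  have eq_rpow : dipoleProfile n =ᶠ[𝓝 s] fun s ↦ s ^ (-(n : ℝ) / 2) := by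
    filter_upwards [lt_mem_nhds hs] with t ht using dipoleProfile_of_one_le ht.le
  have hs₀ : 0 < s := one_pos.trans hs
  rw [eq_rpow.deriv_eq, Real.deriv_rpow_const, dipoleProfile_of_one_le hs.le,
    Real.rpow_sub_one hs₀.ne']
  field_simp

lemma sourceProfile_eq_zero (hs : 1 < s) : sourceProfile n s = 0 := by
  rw [sourceProfile, mul_assoc, mul_deriv_dipoleProfile hs]
  ring

lemma contDiff_sourceProfile : ContDiff ℝ 1 (sourceProfile n) := by
  have hq : ContDiff ℝ 1 (dipoleProfile n) := contDiff_dipoleProfile.of_le (by simp)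
  have hq' : ContDiff ℝ 1 (deriv (dipoleProfile n)) :=
    (contDiff_dipoleProfile.iterate_deriv 1).of_le (by simp)
  unfold sourceProfile
  fun_prop

lemma intervalIntegral_sourceProfile (hn : n ≠ 0) :
    ∫ r in 0..1, r ^ (n - 1) * sourceProfile n (r ^ 2) = 1 := by
  have hasDerivAt_flux (r : ℝ) : HasDerivAt (fun r ↦ r ^ n * dipoleProfile n (r ^ 2))
      (r ^ (n - 1) * sourceProfile n (r ^ 2)) r := by
    have hq : HasDerivAt (dipoleProfile n) (deriv (dipoleProfile n) (r ^ 2)) (r ^ 2) :=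
      (contDiff_dipoleProfile.differentiable (by simp) _).hasDerivAt
    have hq_sq := HasDerivAt.comp (h := fun r ↦ r ^ 2) r hq (hasDerivAt_pow 2 r)
    refine ((hasDerivAt_pow n r).fun_mul hq_sq).congr_deriv ?_
    rw [sourceProfile, ← mul_pow_sub_one hn r]
    simp only [Function.comp_apply, Nat.cast_ofNat, Nat.add_one_sub_one, pow_one]
    ring
  have hρ := (contDiff_sourceProfile (n := n)).continuous
  rw [intervalIntegral.integral_eq_sub_of_hasDerivAt (fun r _ ↦ hasDerivAt_flux r)
    (Continuous.intervalIntegrable (by fun_prop) _ _)]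
  simp [dipoleProfile_of_one_le, hn]

end Profile

variable {E : Type*} [NormedAddCommGroup E] [InnerProductSpace ℝ E]

lemma fderiv_comp_norm_sq {q : ℝ → ℝ} (hq : Differentiable ℝ q) (l z : E) :
    fderiv ℝ (fun z ↦ q (‖z‖ ^ 2)) z l = 2 * ⟪l, z⟫ * deriv q (‖z‖ ^ 2) := by
  rw [fderiv_comp_real (f := fun z ↦ ‖z‖ ^ 2) (hq _)
    ((contDiff_norm_sq ℝ (n := 1)).differentiable one_ne_zero z), fderiv_norm_sq_apply]
  simp only [smul_apply, innerSL_apply_apply, smul_eq_mul, nsmul_eq_mul, real_inner_comm z l]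
  ring

lemma fderiv_inner_mul_comp_norm_sq {q : ℝ → ℝ} (hq : Differentiable ℝ q) (l z ν : E) :
    fderiv ℝ (fun z ↦ ⟪l, z⟫ * q (‖z‖ ^ 2)) z ν =
      ⟪l, ν⟫ * q (‖z‖ ^ 2) + 2 * (⟪l, z⟫ * ⟪ν, z⟫) * deriv q (‖z‖ ^ 2) := by
  have hl : HasFDerivAt (fun z ↦ ⟪l, z⟫) (innerSL ℝ l) z := (innerSL ℝ l).hasFDerivAt
  have hq_norm : DifferentiableAt ℝ (fun z : E ↦ q (‖z‖ ^ 2)) z :=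
    (hq _).comp z ((contDiff_norm_sq ℝ (n := 1)).differentiable one_ne_zero z)
  rw [fderiv_fun_mul hl.differentiableAt hq_norm, hl.fderiv]
  simp only [add_apply, smul_apply, innerSL_apply_apply, smul_eq_mul, fderiv_comp_norm_sq hq]
  ring

lemma laplacian_inner_mul_comp_norm_sq [FiniteDimensional ℝ E] {q : ℝ → ℝ} (hq : ContDiff ℝ 2 q)
    (l z : E) :
    Δ (fun z ↦ ⟪l, z⟫ * q (‖z‖ ^ 2)) z =
      fderiv ℝ (fun z ↦ finrank ℝ E * q (‖z‖ ^ 2) + 2 * ‖z‖ ^ 2 * deriv q (‖z‖ ^ 2)) z l := by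
  have hq' : ContDiff ℝ 1 (deriv q) := hq.iterate_deriv' 1 1
  have hq₁ := hq.differentiable two_ne_zero
  have hq₁' := hq'.differentiable one_ne_zero
  have gradient_inner : ∇ (fun z ↦ ⟪l, z⟫) z = l := by
    simpa using gradient_comp_inner_add (φ := id) l 0 differentiableAt_id
  have laplacian_inner : Δ (fun z ↦ ⟪l, z⟫) z = 0 := by
    simpa using laplacian_comp_inner_add contDiff_id l 0 z
  have hl : ContDiff ℝ 2 (fun z ↦ ⟪l, z⟫) := (innerSL ℝ l).contDiff
  have hq_norm : ContDiff ℝ 2 (fun z : E ↦ q (‖z‖ ^ 2)) := hq.comp (contDiff_norm_sq ℝ)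
  have deriv_profile (s : ℝ) : deriv (fun s ↦ finrank ℝ E * q s + 2 * s * deriv q s) s =
      finrank ℝ E * deriv q s + (2 * deriv q s + 2 * s * deriv (deriv q) s) := by
    have h₁ := ((hasDerivAt_id s).const_mul 2).fun_mul (hq₁' s).hasDerivAt
    simpa using (((hq₁ s).hasDerivAt.const_mul (finrank ℝ E : ℝ)).fun_add h₁).deriv
  rw [laplacian_mul hl.contDiffAt hq_norm.contDiffAt, gradient_inner,
    laplacian_inner, laplacian_comp_norm_sq hq, fderiv_comp_norm_sq hq₁,
    fderiv_comp_norm_sq (q := fun s ↦ finrank ℝ E * q s + 2 * s * deriv q s) (by fun_prop),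
    deriv_profile]
  ring

end Dipole

section SmoothDipole

open scoped Laplacian

variable {E : Type*} [NormedAddCommGroup E] [InnerProductSpace ℝ E]

/-- The dipole field `⟪l, z⟫ / ‖z‖ ^ n`, `n = dim E`, smoothed inside the ball of radius `r`. The
value at `r = 1` determines all the others, because the field is homogeneous of degree `1 - n`. -/
def smoothDipole (r : ℝ) (l z : E) : ℝ :=
  r * (r ^ finrank ℝ E)⁻¹ * (⟪l, r⁻¹ • z⟫ * dipoleProfile (finrank ℝ E) (‖r⁻¹ • z‖ ^ 2))

/-- The charge density, of total mass the area of the unit sphere and supported in the unit ball,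
whose derivative in the direction `l` is the Laplacian of `smoothDipole 1 l`. -/
def dipoleSource (z : E) : ℝ :=
  sourceProfile (finrank ℝ E) (‖z‖ ^ 2)

variable {r : ℝ} {l ν z : E}

lemma contDiff_smoothDipole (r : ℝ) (l : E) : ContDiff ℝ 2 (smoothDipole r l) := by
  have hl : ContDiff ℝ 2 (fun z ↦ ⟪l, r⁻¹ • z⟫) :=
    (innerSL ℝ l).contDiff.comp (contDiff_const_smul r⁻¹)
  have hq : ContDiff ℝ 2 (dipoleProfile (finrank ℝ E)) := contDiff_infty.1 contDiff_dipoleProfile 2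
  exact contDiff_const.mul (hl.mul (hq.comp ((contDiff_const_smul r⁻¹).norm_sq ℝ)))

lemma contDiff_dipoleSource : ContDiff ℝ 1 (dipoleSource (E := E)) :=
  contDiff_sourceProfile.comp (contDiff_norm_sq ℝ)

lemma tsupport_dipoleSource_subset : tsupport (dipoleSource (E := E)) ⊆ closedBall 0 1 := by
  refine closure_minimal (fun z hz ↦ ?_) isClosed_closedBall
  rw [mem_closedBall_zero_iff]
  exact not_lt.1 fun h ↦ hz (sourceProfile_eq_zero (one_lt_pow₀ h two_ne_zero))

lemma fderiv_smoothDipole (hr : r ≠ 0) (l z ν : E) : fderiv ℝ (smoothDipole r l) z ν =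
    (r ^ finrank ℝ E)⁻¹ * (⟪l, ν⟫ * dipoleProfile (finrank ℝ E) (‖r⁻¹ • z‖ ^ 2) +
      2 * (⟪l, r⁻¹ • z⟫ * ⟪ν, r⁻¹ • z⟫) *
        deriv (dipoleProfile (finrank ℝ E)) (‖r⁻¹ • z‖ ^ 2)) := by
  let g (z : E) : ℝ := ⟪l, z⟫ * dipoleProfile (finrank ℝ E) (‖z‖ ^ 2)
  have eq_smul : smoothDipole r l = (r * (r ^ finrank ℝ E)⁻¹) • fun z ↦ g (r⁻¹ • z) := rfl
  rw [eq_smul, fderiv_const_smul_field, Pi.smul_apply, fderiv_comp_smul, smul_smul, smul_apply,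
    fderiv_inner_mul_comp_norm_sq (contDiff_dipoleProfile.differentiable (by simp)), smul_eq_mul]
  field_simp

lemma smoothDipole_of_le_norm (hr : 0 < r) (hz : r ≤ ‖z‖) :
    smoothDipole r l z = ⟪l, z⟫ * (‖z‖ ^ finrank ℝ E)⁻¹ := by
  have one_le : 1 ≤ ‖r⁻¹ • z‖ := by
    rwa [norm_smul, norm_inv, Real.norm_of_nonneg hr.le, le_inv_mul_iff₀ hr, mul_one]
  rw [smoothDipole, dipoleProfile_sq one_le, norm_smul, norm_inv, Real.norm_of_nonneg hr.le,
    real_inner_smul_right, mul_pow, inv_pow]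
  field_simp

lemma fderiv_smoothDipole_of_lt_norm (hr : 0 < r) (hz : r < ‖z‖) :
    fderiv ℝ (smoothDipole r l) z ν = (‖z‖ ^ finrank ℝ E)⁻¹ *
      (⟪l, ν⟫ - finrank ℝ E * (⟪l, ‖z‖⁻¹ • z⟫ * ⟪ν, ‖z‖⁻¹ • z⟫)) := by
  have hz₀ : 0 < ‖z‖ := hr.trans hz
  have norm_eq : ‖r⁻¹ • z‖ = r⁻¹ * ‖z‖ := by rw [norm_smul, norm_inv, Real.norm_of_nonneg hr.le]
  have one_lt : 1 < ‖r⁻¹ • z‖ := by rwa [norm_eq, lt_inv_mul_iff₀ hr, mul_one]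
  have hq' := mul_deriv_dipoleProfile (n := finrank ℝ E) (one_lt_pow₀ one_lt two_ne_zero)
  rw [dipoleProfile_sq one_lt.le] at hq'
  rw [fderiv_smoothDipole hr.ne', dipoleProfile_sq one_lt.le,
    eq_div_of_mul_eq (by positivity) ((mul_comm _ _).trans hq'), norm_eq]
  simp only [real_inner_smul_right, mul_pow, inv_pow]
  field_simp
  ring

lemma tsupport_smoothDipole_sub_subset {r₁ r₂ : ℝ} (h₁ : 0 < r₁) (h : r₁ ≤ r₂) (l : E) :
    tsupport (smoothDipole r₁ l - smoothDipole r₂ l) ⊆ closedBall 0 r₂ := by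
  refine closure_minimal (fun z hz ↦ ?_) isClosed_closedBall
  rw [mem_closedBall_zero_iff]
  by_contra! hz₂
  exact hz (sub_eq_zero.2 (by rw [smoothDipole_of_le_norm h₁ (h.trans hz₂.le),
    smoothDipole_of_le_norm (h₁.trans_le h) hz₂.le]))

variable (E) in
lemma exists_abs_fderiv_smoothDipole_le : ∃ C : ℝ, 0 ≤ C ∧ ∀ (r : ℝ) (l z ν : E), 0 < r →
    ‖l‖ = 1 → ‖ν‖ = 1 → ‖z‖ ≤ r →
      |fderiv ℝ (smoothDipole r l) z ν| ≤ C * (r ^ finrank ℝ E)⁻¹ := by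
  let q := dipoleProfile (finrank ℝ E)
  have hq : ContDiff ℝ 1 q := contDiff_infty.1 contDiff_dipoleProfile 1
  have hq' : Continuous (deriv q) := hq.continuous_deriv le_rfl
  obtain ⟨C, hC⟩ := (isCompact_Icc (a := (0 : ℝ)) (b := 1)).exists_bound_of_continuousOn
    (f := fun s ↦ ‖q s‖ + 2 * ‖deriv q s‖)
    (hq.continuous.norm.add (hq'.norm.const_mul 2)).continuousOn
  refine ⟨C, (norm_nonneg _).trans (hC 0 (by simp)), fun r l z ν hr hl hν hz ↦ ?_⟩
  have norm_le : ‖r⁻¹ • z‖ ≤ 1 := by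
    rwa [norm_smul, norm_inv, Real.norm_of_nonneg hr.le, inv_mul_le_one₀ hr]
  have inner_le {e : E} (he : ‖e‖ = 1) : |⟪e, r⁻¹ • z⟫| ≤ 1 :=
    (abs_real_inner_le_norm e _).trans (by rwa [he, one_mul])
  have inner_le' : |⟪l, ν⟫| ≤ 1 := by simpa [hl, hν] using abs_real_inner_le_norm l ν
  set w := r⁻¹ • z
  have bound := (le_abs_self _).trans
    (hC (‖w‖ ^ 2) ⟨by positivity, pow_le_one₀ (norm_nonneg _) norm_le⟩)
  rw [fderiv_smoothDipole hr.ne', abs_mul, abs_of_pos (by positivity : 0 < (r ^ finrank ℝ E)⁻¹),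
    mul_comm]
  gcongr
  calc |⟪l, ν⟫ * q (‖w‖ ^ 2) + 2 * (⟪l, w⟫ * ⟪ν, w⟫) * deriv q (‖w‖ ^ 2)|
      ≤ |⟪l, ν⟫| * ‖q (‖w‖ ^ 2)‖ + 2 * (|⟪l, w⟫| * |⟪ν, w⟫|) * ‖deriv q (‖w‖ ^ 2)‖ := by
        refine (abs_add_le _ _).trans_eq ?_
        simp only [abs_mul, abs_two, Real.norm_eq_abs]
    _ ≤ 1 * ‖q (‖w‖ ^ 2)‖ + 2 * (1 * 1) * ‖deriv q (‖w‖ ^ 2)‖ := by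
        gcongr
        exacts [inner_le hl, inner_le hν]
    _ ≤ C := by simpa using bound

variable [FiniteDimensional ℝ E]

lemma laplacian_smoothDipole (hr : r ≠ 0) (l z : E) :
    Δ (smoothDipole r l) z =
      r⁻¹ * (r ^ finrank ℝ E)⁻¹ * fderiv ℝ dipoleSource (r⁻¹ • z) l := by
  let g (z : E) : ℝ := ⟪l, z⟫ * dipoleProfile (finrank ℝ E) (‖z‖ ^ 2)
  have hg : ContDiff ℝ 2 g := by
    simpa [funext fun z ↦ smoothDipole.eq_def 1 l z] using contDiff_smoothDipole 1 l
  have laplacian_comp_smul : Δ (fun z ↦ g (r⁻¹ • z)) z = r⁻¹ ^ 2 • Δ g (r⁻¹ • z) := by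
    simpa using laplacian_comp_add_smul g 0 r⁻¹ z
  have laplacian_g : Δ g (r⁻¹ • z) = fderiv ℝ dipoleSource (r⁻¹ • z) l :=
    laplacian_inner_mul_comp_norm_sq (contDiff_infty.1 contDiff_dipoleProfile 2) _ _
  have eq_smul : smoothDipole r l = (r * (r ^ finrank ℝ E)⁻¹) • fun z ↦ g (r⁻¹ • z) := rfl
  rw [eq_smul, laplacian_smul _ (by fun_prop), laplacian_comp_smul, laplacian_g]
  simp only [smul_eq_mul]
  field_simp

lemma laplacian_smoothDipole_eq_zero (hr : 0 < r) (hz : r < ‖z‖) :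
    Δ (smoothDipole r l) z = 0 := by
  have hz' : r⁻¹ • z ∉ tsupport (fderiv ℝ (dipoleSource (E := E))) := by
    refine fun h ↦ hz.not_ge ?_
    have := tsupport_dipoleSource_subset (tsupport_fderiv_subset ℝ h)
    rwa [mem_closedBall_zero_iff, norm_smul, norm_inv, Real.norm_of_nonneg hr.le,
      inv_mul_le_one₀ hr] at this
  rw [laplacian_smoothDipole hr.ne', image_eq_zero_of_notMem_tsupport hz', zero_apply, mul_zero]

lemma hasCompactSupport_dipoleSource : HasCompactSupport (dipoleSource (E := E)) :=
  (isCompact_closedBall 0 1).of_isClosed_subset (isClosed_tsupport _) tsupport_dipoleSource_subset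

variable [MeasurableSpace E] [BorelSpace E]

lemma integral_dipoleSource [Nontrivial E] :
    ∫ z : E, dipoleSource z = sphereArea (finrank ℝ E) := by
  have radial_integral : ∫ r in Ioi (0 : ℝ), r ^ (finrank ℝ E - 1) •
      sourceProfile (finrank ℝ E) (r ^ 2) = 1 := by
    rw [← intervalIntegral_sourceProfile (finrank_pos (R := ℝ) (M := E)).ne',
      intervalIntegral.integral_of_le zero_le_one]
    refine setIntegral_eq_of_subset_of_forall_sdiff_eq_zero measurableSet_Ioi Ioc_subset_Ioi_self ?_
    rintro r ⟨hr₀, hr₁⟩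
    have hr : 1 < r := not_le.1 fun h ↦ hr₁ ⟨hr₀, h⟩
    rw [sourceProfile_eq_zero (one_lt_pow₀ hr two_ne_zero), smul_zero]
  have area : finrank ℝ E * volume.real (ball (0 : E) 1) = sphereArea (finrank ℝ E) := by
    rw [← ENNReal.toReal_ofReal (sphereArea_pos finrank_pos).le, ← finrank_mul_volume_ball]
    simp [Measure.real]
  unfold dipoleSource
  rw [integral_fun_norm_addHaar volume (fun r ↦ sourceProfile (finrank ℝ E) (r ^ 2)),
    radial_integral, smul_eq_mul, mul_one, nsmul_eq_mul, area]

lemma lintegral_enorm_laplacian_smoothDipole_le (hr : 0 < r) (hl : ‖l‖ = 1) :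
    ∫⁻ z, ‖Δ (smoothDipole r l) z‖ₑ ≤
      ENNReal.ofReal r⁻¹ * ∫⁻ z, ‖fderiv ℝ (dipoleSource (E := E)) z‖ₑ := by
  have hρ : Continuous (fderiv ℝ (dipoleSource (E := E))) :=
    contDiff_dipoleSource.continuous_fderiv one_ne_zero
  have enorm_le (z : E) : ‖Δ (smoothDipole r l) z‖ₑ ≤ ENNReal.ofReal r⁻¹ *
      ENNReal.ofReal (r⁻¹ ^ finrank ℝ E) * ‖fderiv ℝ (dipoleSource (E := E)) (r⁻¹ • z)‖ₑ := by
    have hle := (fderiv ℝ (dipoleSource (E := E)) (r⁻¹ • z)).le_opNorm l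
    rw [hl, mul_one] at hle
    rw [laplacian_smoothDipole hr.ne', ← ofReal_norm, ← ofReal_norm,
      ← ENNReal.ofReal_mul (by positivity), ← ENNReal.ofReal_mul (by positivity), norm_mul,
      Real.norm_of_nonneg (by positivity), inv_pow]
    gcongr
  calc ∫⁻ z, ‖Δ (smoothDipole r l) z‖ₑ
      ≤ ∫⁻ z, ENNReal.ofReal r⁻¹ * ENNReal.ofReal (r⁻¹ ^ finrank ℝ E) *
          ‖fderiv ℝ (dipoleSource (E := E)) (r⁻¹ • z)‖ₑ := lintegral_mono enorm_le
    _ = _ := by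
      rw [lintegral_const_mul _ (by fun_prop), mul_assoc, ofReal_pow_mul_lintegral_comp_smul volume
        hρ.enorm.measurable (inv_pos.2 hr)]

variable (E) in
lemma lintegral_enorm_fderiv_dipoleSource_ne_top :
    ∫⁻ z, ‖fderiv ℝ (dipoleSource (E := E)) z‖ₑ ≠ ⊤ := by
  have hρ : Continuous (fderiv ℝ (dipoleSource (E := E))) :=
    contDiff_dipoleSource.continuous_fderiv one_ne_zero
  exact (hρ.integrable_of_hasCompactSupport
    (hasCompactSupport_dipoleSource.fderiv ℝ)).hasFiniteIntegral.ne

lemma integral_mul_laplacian_smoothDipole {v : E → ℝ} (hv : ContDiff ℝ 1 v) (l : E) (hr : 0 < r) :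
    ∫ z, v z * Δ (smoothDipole r l) z =
      -∫ w in closedBall 0 1, fderiv ℝ v (r • w) l * dipoleSource w := by
  have rescale : ∫ z, v z * Δ (smoothDipole r l) z =
      r⁻¹ * ∫ w, v (r • w) * fderiv ℝ dipoleSource w l := by
    have h := Measure.integral_comp_smul volume
      (fun z ↦ v z * fderiv ℝ dipoleSource (r⁻¹ • z) l) r
    simp only [inv_smul_smul₀ hr.ne'] at h
    rw [h, abs_of_pos (by positivity), smul_eq_mul, ← integral_const_mul, ← integral_const_mul]
    congr 1 with z
    rw [laplacian_smoothDipole hr.ne']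
    ring
  have hv_comp : ContDiff ℝ 1 (fun w ↦ v (r • w)) := hv.comp (contDiff_const_smul r)
  rw [rescale, integral_mul_fderiv_of_hasCompactSupport volume hv_comp contDiff_dipoleSource
    hasCompactSupport_dipoleSource, setIntegral_eq_integral_of_forall_compl_eq_zero, mul_neg,
    ← integral_const_mul]
  · congr 2 with w
    rw [fderiv_comp_smul, smul_apply, smul_eq_mul]
    field_simp
  · intro w hw
    rw [image_eq_zero_of_notMem_tsupport fun h ↦ hw (tsupport_dipoleSource_subset h), mul_zero]

lemma tendsto_integral_mul_laplacian_smoothDipole [Nontrivial E] {v : E → ℝ}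
    (hv : ContDiff ℝ 1 v) (l : E) :
    Tendsto (fun r ↦ ∫ z, v z * Δ (smoothDipole r l) z) (𝓝[>] 0)
      (𝓝 (-(sphereArea (finrank ℝ E) * fderiv ℝ v 0 l))) := by
  have hρ : Continuous (dipoleSource (E := E)) := contDiff_dipoleSource.continuous
  have hcont : Continuous (fun r : ℝ ↦
      -∫ w in closedBall (0 : E) 1, fderiv ℝ v (r • w) l * dipoleSource w) :=
    (continuous_parametric_integral_of_continuous (by fun_prop) (isCompact_closedBall 0 1)).neg
  have limit_eq : ∫ w in closedBall (0 : E) 1, fderiv ℝ v ((0 : ℝ) • w) l * dipoleSource w =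
      sphereArea (finrank ℝ E) * fderiv ℝ v 0 l := by
    simp only [zero_smul]
    rw [integral_const_mul, setIntegral_eq_integral_of_forall_compl_eq_zero, integral_dipoleSource,
      mul_comm]
    exact fun w hw ↦
      image_eq_zero_of_notMem_tsupport fun h ↦ hw (tsupport_dipoleSource_subset h)
  rw [← limit_eq]
  refine ((hcont.tendsto 0).mono_left nhdsWithin_le_nhds).congr' ?_
  filter_upwards [self_mem_nhdsWithin] with r hr
    using (integral_mul_laplacian_smoothDipole hv l hr).symm

end SmoothDipole

section LayerIntegrals

lemma exists_contDiff_tsupport_subset_Icc_integral_eq_one {a b : ℝ} (hab : a < b) :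
    ∃ φ : ℝ → ℝ, ContDiff ℝ 2 φ ∧ tsupport φ ⊆ Icc a b ∧ ∫ σ, φ σ = 1 ∧ ∫⁻ σ, ‖φ σ‖ₑ = 1 := by
  let f : ContDiffBump ((a + b) / 2) := ⟨(b - a) / 4, (b - a) / 2, by linarith, by linarith⟩
  refine ⟨f.normed volume, f.contDiff_normed, ?_, f.integral_normed, ?_⟩
  · rw [f.tsupport_normed_eq, Real.closedBall_eq_Icc]
    exact Icc_subset_Icc (by simp only [f]; linarith) (by simp only [f]; linarith)
  · simp_rw [Real.enorm_of_nonneg (f.nonneg_normed _)]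
    rw [← ofReal_integral_eq_lintegral_ofReal f.integrable_normed
      (ae_of_all _ f.nonneg_normed), f.integral_normed, ENNReal.ofReal_one]

variable {E : Type*} [NormedAddCommGroup E] [InnerProductSpace ℝ E] [FiniteDimensional ℝ E]
  [MeasurableSpace E] [BorelSpace E] {φ : ℝ → ℝ} {a : ℝ}

lemma lintegral_comp_inner_mul_le [Nontrivial E] {H : E → ℝ≥0∞} (hH : Measurable H)
    (hφ : Continuous φ) (ha : 0 < a) (hφs : tsupport φ ⊆ Ici a) (ν : E) :
    ∫⁻ z, ‖φ ⟪ν, z⟫‖ₑ * (ENNReal.ofReal (‖z‖ ^ finrank ℝ E)⁻¹ * H (‖z‖⁻¹ • z)) ≤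
      ENNReal.ofReal a⁻¹ * (∫⁻ σ, ‖φ σ‖ₑ) *
        sphereLIntegral ({z | 0 < ⟪ν, z⟫}.indicator H) := by
  have hφa {σ : ℝ} (hσ : φ σ ≠ 0) : a ≤ σ := hφs (subset_tsupport φ hσ)
  have weight_le : ∫⁻ s in Ioi 0, ‖φ s‖ₑ * ENNReal.ofReal s⁻¹ ≤
      ENNReal.ofReal a⁻¹ * ∫⁻ σ, ‖φ σ‖ₑ := by
    rw [← lintegral_const_mul _ hφ.enorm.measurable]
    refine (setLIntegral_le_lintegral _ _).trans (lintegral_mono fun s ↦ ?_)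
    by_cases hs : φ s = 0
    · simp [hs]
    · rw [mul_comm]
      gcongr
      exact hφa hs
  have support_subset : Function.support (fun z ↦ ‖φ ⟪ν, z⟫‖ₑ *
      (ENNReal.ofReal (‖z‖ ^ finrank ℝ E)⁻¹ * H (‖z‖⁻¹ • z))) ⊆ {z | 0 < ⟪ν, z⟫} :=
    fun z hz ↦ ha.trans_le (hφa (enorm_ne_zero.1 (left_ne_zero_of_mul hz)))
  rw [← setLIntegral_eq_of_support_subset support_subset,
    lintegral_halfSpace_comp_inner_mul hH hφ.enorm.measurable]
  gcongr

lemma tendsto_lintegral_comp_inner_mul_indicator_closedBall [Nontrivial E] (hφ : Continuous φ)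
    (ha : 0 < a) (hφs : tsupport φ ⊆ Ici a) (hφi : ∫⁻ σ, ‖φ σ‖ₑ ≠ ⊤) (ν : E) :
    Tendsto (fun M : ℝ ↦ ∫⁻ z : E, ‖φ ⟪ν, z⟫‖ₑ *
      (closedBall 0 M).indicator (fun _ ↦ ENNReal.ofReal (M ^ finrank ℝ E)⁻¹) z) atTop (𝓝 0) := by
  have inv_pow_tendsto : Tendsto (fun M : ℝ ↦ ENNReal.ofReal (M ^ finrank ℝ E)⁻¹) atTop (𝓝 0) := by
    simpa using ENNReal.tendsto_ofReal
      (tendsto_pow_atTop (α := ℝ) (finrank_pos (R := ℝ) (M := E)).ne').inv_tendsto_atTop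
  rw [← lintegral_zero (μ := (volume : Measure E))]
  refine tendsto_lintegral_filter_of_dominated_convergence
    (fun z ↦ ‖φ ⟪ν, z⟫‖ₑ * (ENNReal.ofReal (‖z‖ ^ finrank ℝ E)⁻¹ * 1)) ?_ ?_ ?_ ?_
  · refine Eventually.of_forall fun M ↦ ?_
    have := hφ.measurable
    fun_prop (disch := exact measurableSet_closedBall)
  · refine Eventually.of_forall fun M ↦ ae_of_all _ fun z ↦ ?_
    rw [mul_one]
    by_cases hφz : φ ⟪ν, z⟫ = 0
    · simp [hφz]
    gcongr
    refine indicator_apply_le' (fun hzM ↦ ?_) fun _ ↦ zero_le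
    have hz : 0 < ‖z‖ := norm_pos_iff.2 fun h ↦
      ha.not_ge (by simpa [h] using hφs (subset_tsupport φ hφz))
    gcongr
    exact mem_closedBall_zero_iff.1 hzM
  · refine ((lintegral_comp_inner_mul_le measurable_const hφ ha hφs ν).trans_lt ?_).ne
    refine ENNReal.mul_lt_top (ENNReal.mul_lt_top ENNReal.ofReal_lt_top hφi.lt_top) ?_
    refine (lintegral_mono fun e ↦ indicator_le_self _ _ _).trans_lt ?_
    rw [lintegral_const, one_mul]
    exact measure_lt_top _ _
  · refine ae_of_all _ fun z ↦ ?_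
    rw [← mul_zero ‖φ ⟪ν, z⟫‖ₑ]
    refine ENNReal.Tendsto.const_mul (tendsto_of_tendsto_of_tendsto_of_le_of_le tendsto_const_nhds
      inv_pow_tendsto (fun _ ↦ zero_le) fun M ↦ indicator_le_self _ _ _) (.inr enorm_ne_top)

lemma exists_enorm_fderiv_smoothDipole_sub_le (E : Type*) [NormedAddCommGroup E]
    [InnerProductSpace ℝ E] : ∃ C : ℝ≥0∞, C ≠ ⊤ ∧
    ∀ (r M : ℝ) (l ν z : E), 0 < r → r ≤ M → ‖l‖ = 1 → ‖ν‖ = 1 → r < ‖z‖ →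
      ‖fderiv ℝ (smoothDipole r l - smoothDipole M l) z ν‖ₑ ≤
        ENNReal.ofReal (‖z‖ ^ finrank ℝ E)⁻¹ * dipoleKernel l ν (‖z‖⁻¹ • z) +
          C * (closedBall 0 M).indicator (fun _ ↦ ENNReal.ofReal (M ^ finrank ℝ E)⁻¹) z := by
  obtain ⟨C, hC₀, hC⟩ := exists_abs_fderiv_smoothDipole_le E
  refine ⟨ENNReal.ofReal C, ENNReal.ofReal_ne_top, fun r M l ν z hr hrM hl hν hz ↦ ?_⟩
  have hM : 0 < M := hr.trans_le hrM
  have fderiv_diff : fderiv ℝ (smoothDipole r l - smoothDipole M l) z ν =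
      fderiv ℝ (smoothDipole r l) z ν - fderiv ℝ (smoothDipole M l) z ν := by
    rw [fderiv_sub ((contDiff_smoothDipole r l).differentiable (by norm_num) z)
      ((contDiff_smoothDipole M l).differentiable (by norm_num) z), sub_apply]
  rw [fderiv_diff]
  rcases lt_or_ge M ‖z‖ with hMz | hMz
  · rw [fderiv_smoothDipole_of_lt_norm hr hz, fderiv_smoothDipole_of_lt_norm hM hMz, sub_self,
      enorm_zero]
    exact zero_le
  · have inner_part : ‖fderiv ℝ (smoothDipole r l) z ν‖ₑ =
        ENNReal.ofReal (‖z‖ ^ finrank ℝ E)⁻¹ * dipoleKernel l ν (‖z‖⁻¹ • z) := by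
      rw [fderiv_smoothDipole_of_lt_norm hr hz, Real.enorm_eq_ofReal_abs, dipoleKernel, abs_mul,
        abs_of_nonneg (by positivity), ENNReal.ofReal_mul (by positivity)]
    have outer_part : ‖fderiv ℝ (smoothDipole M l) z ν‖ₑ ≤
        ENNReal.ofReal C * ENNReal.ofReal (M ^ finrank ℝ E)⁻¹ := by
      rw [Real.enorm_eq_ofReal_abs, ← ENNReal.ofReal_mul hC₀]
      exact ENNReal.ofReal_le_ofReal (hC M l z ν hM hl hν hMz)
    rw [indicator_of_mem (mem_closedBall_zero_iff.2 hMz), ← inner_part]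
    exact (enorm_sub_le).trans (by gcongr)

lemma exists_lintegral_comp_inner_mul_fderiv_smoothDipole_sub_le (hE : 2 ≤ finrank ℝ E)
    (hφ : Continuous φ) (ha : 0 < a) (hφs : tsupport φ ⊆ Ici a) (hφi : ∫⁻ σ, ‖φ σ‖ₑ = 1) {ν : E}
    (hν : ‖ν‖ = 1) : ∃ err : ℝ → ℝ≥0∞, Tendsto err atTop (𝓝 0) ∧
    ∀ (r M : ℝ) (l : E), 0 < r → r < a → r ≤ M → ‖l‖ = 1 →
      2 * ∫⁻ z, ‖φ ⟪ν, z⟫‖ₑ * ‖fderiv ℝ (smoothDipole r l - smoothDipole M l) z ν‖ₑ ≤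
        ENNReal.ofReal (a⁻¹ * (Cconst (finrank ℝ E) * sphereArea (finrank ℝ E))) + err M := by
  have : Nontrivial E := nontrivial_of_finrank_pos (R := ℝ) (by lia)
  obtain ⟨C, hC_top, hC⟩ := exists_enorm_fderiv_smoothDipole_sub_le E
  set tail : ℝ → ℝ≥0∞ := fun M ↦ ∫⁻ z : E, ‖φ ⟪ν, z⟫‖ₑ *
    (closedBall 0 M).indicator (fun _ ↦ ENNReal.ofReal (M ^ finrank ℝ E)⁻¹) z
  have tail_tendsto : Tendsto tail atTop (𝓝 0) :=
    tendsto_lintegral_comp_inner_mul_indicator_closedBall hφ ha hφs (by simp [hφi]) ν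
  refine ⟨fun M ↦ 2 * C * tail M, ?_, fun r M l hr hra hrM hl ↦ ?_⟩
  · simpa using ENNReal.Tendsto.const_mul tail_tendsto
      (.inr (ENNReal.mul_ne_top ENNReal.ofNat_ne_top hC_top))
  have hφm := hφ.measurable
  have pointwise (z : E) :
      ‖φ ⟪ν, z⟫‖ₑ * ‖fderiv ℝ (smoothDipole r l - smoothDipole M l) z ν‖ₑ ≤
        ‖φ ⟪ν, z⟫‖ₑ * (ENNReal.ofReal (‖z‖ ^ finrank ℝ E)⁻¹ * dipoleKernel l ν (‖z‖⁻¹ • z)) +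
          C * (‖φ ⟪ν, z⟫‖ₑ *
            (closedBall 0 M).indicator (fun _ ↦ ENNReal.ofReal (M ^ finrank ℝ E)⁻¹) z) := by
    by_cases hφz : φ ⟪ν, z⟫ = 0
    · simp [hφz]
    have hrz : r < ‖z‖ := hra.trans_le <| (hφs (subset_tsupport φ hφz)).trans <| by
      simpa [hν] using real_inner_le_norm ν z
    rw [mul_left_comm C, ← mul_add]
    gcongr
    exact hC r M l ν z hr hrM hl hν hrz
  have main_term := lintegral_comp_inner_mul_le (measurable_dipoleKernel l ν) hφ ha hφs ν
  rw [hφi, mul_one] at main_term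
  calc 2 * ∫⁻ z, ‖φ ⟪ν, z⟫‖ₑ * ‖fderiv ℝ (smoothDipole r l - smoothDipole M l) z ν‖ₑ
      ≤ 2 * (ENNReal.ofReal a⁻¹ * sphereLIntegral ({z | 0 < ⟪ν, z⟫}.indicator (dipoleKernel l ν)) +
          C * tail M) := by
        gcongr
        refine (lintegral_mono pointwise).trans ?_
        rw [lintegral_add_left (by fun_prop), lintegral_const_mul _
          (by fun_prop (disch := exact measurableSet_closedBall))]
        gcongr
    _ ≤ _ := by
        rw [ENNReal.ofReal_mul (by positivity), mul_add, ← mul_assoc 2 C, mul_left_comm]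
        gcongr
        exact two_mul_hemisphere_dipoleKernel_le hE hl hν

end LayerIntegrals

section HalfSpace

open scoped Laplacian

variable {E : Type*} [NormedAddCommGroup E] [InnerProductSpace ℝ E] [FiniteDimensional ℝ E] {ν : E}

lemma exists_ofReal_mul_abs_fderiv_le (hE : 2 ≤ finrank ℝ E) {a : ℝ} (ha : 0 < a) (ha₁ : a < 1)
    (hν : ‖ν‖ = 1) : ∃ err : ℝ → ℝ≥0∞, Tendsto err atTop (𝓝 0) ∧
    ∀ M > 0, ∀ l : E, ‖l‖ = 1 → ∀ v : E → ℝ, ContDiff ℝ 2 v → (∀ z, |v z| ≤ 1) →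
      (∀ z, ⟪ν, z⟫ ≤ 1 → ‖z‖ ≤ 3 * M + 6 → Δ v z = 0) →
      ENNReal.ofReal (sphereArea (finrank ℝ E) * |fderiv ℝ v 0 l|) ≤
        ENNReal.ofReal (a⁻¹ * (Cconst (finrank ℝ E) * sphereArea (finrank ℝ E))) + err M := by
  have : Nontrivial E := nontrivial_of_finrank_pos (R := ℝ) (by lia)
  borelize E
  obtain ⟨φ, hφ, hφs, hφi, hφi'⟩ := exists_contDiff_tsupport_subset_Icc_integral_eq_one ha₁
  obtain ⟨err, err_tendsto, boundary_le⟩ :=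
    exists_lintegral_comp_inner_mul_fderiv_smoothDipole_sub_le hE hφ.continuous ha
      (hφs.trans Icc_subset_Ici_self) hφi' hν
  set K : ℝ≥0∞ := ∫⁻ z, ‖fderiv ℝ (dipoleSource (E := E)) z‖ₑ
  refine ⟨fun M ↦ 2 * (ENNReal.ofReal M⁻¹ * K) + err M, ?_, fun M hM l hl v hv hv₁ hΔv ↦ ?_⟩
  · have inv_tendsto : Tendsto (fun M : ℝ ↦ ENNReal.ofReal M⁻¹) atTop (𝓝 0) := by
      simpa using ENNReal.tendsto_ofReal (tendsto_inv_atTop_zero (𝕜 := ℝ))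
    have source_tendsto := ENNReal.Tendsto.const_mul (a := 2) (ENNReal.Tendsto.mul_const inv_tendsto
      (.inr (lintegral_enorm_fderiv_dipoleSource_ne_top E))) (.inr ENNReal.ofNat_ne_top)
    simpa using source_tendsto.add err_tendsto
  have limit := ((tendsto_integral_mul_laplacian_smoothDipole
    (hv.of_le (by norm_num)) l).enorm)
  rw [enorm_neg, Real.enorm_eq_ofReal_abs, abs_mul,
    abs_of_pos (sphereArea_pos finrank_pos)] at limit
  refine le_of_tendsto limit ?_
  filter_upwards [Ioo_mem_nhdsGT (lt_min ha hM)] with r ⟨hr, hr'⟩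
  obtain ⟨hra, hrM⟩ := lt_min_iff.1 hr'
  calc ‖∫ z, v z * Δ (smoothDipole r l) z‖ₑ
      ≤ 2 * (∫⁻ σ, ‖φ σ‖ₑ) * (∫⁻ z, ‖Δ (smoothDipole M l) z‖ₑ) +
          2 * ∫⁻ z, ‖φ ⟪ν, z⟫‖ₑ * ‖fderiv ℝ (smoothDipole r l - smoothDipole M l) z ν‖ₑ :=
        enorm_integral_mul_laplacian_le hr.le hφ
          (hφs.trans fun σ hσ ↦ ⟨hra.trans_le hσ.1, hσ.2⟩) hφi (contDiff_smoothDipole r l)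
          (fun z hz ↦ laplacian_smoothDipole_eq_zero hr hz) (contDiff_smoothDipole M l) hM.le
          (tsupport_smoothDipole_sub_subset hr hrM.le l) hν hv hv₁
          (fun z hz hzM ↦ hΔv z hz (by linarith))
    _ ≤ 2 * (ENNReal.ofReal M⁻¹ * K) + (ENNReal.ofReal (a⁻¹ * (Cconst (finrank ℝ E) *
          sphereArea (finrank ℝ E))) + err M) := by
        rw [hφi', mul_one]
        gcongr
        · exact lintegral_enorm_laplacian_smoothDipole_le hM hl
        · exact boundary_le r M l hr hra hrM.le hl
    _ = _ := add_left_comm _ _ _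

lemma exists_abs_fderiv_le_of_laplacian_eq_zero (hE : 2 ≤ finrank ℝ E) (hν : ‖ν‖ = 1)
    {C : ℝ} (hC : Cconst (finrank ℝ E) < C) : ∃ M > 0, ∀ l : E, ‖l‖ = 1 →
      ∀ v : E → ℝ, ContDiff ℝ 2 v → (∀ z, |v z| ≤ 1) →
        (∀ z, ⟪ν, z⟫ ≤ 1 → ‖z‖ ≤ M → Δ v z = 0) → |fderiv ℝ v 0 l| ≤ C := by
  set n := finrank ℝ E
  have hω : 0 < sphereArea n := sphereArea_pos (by lia)
  have hC₀ : 0 < C := (Cconst_nonneg hE).trans_lt hC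
  obtain ⟨a, ⟨ha, ha₁⟩, haC⟩ : ∃ a ∈ Ioo (0 : ℝ) 1, a⁻¹ * Cconst n < C := by
    have : ContinuousAt (fun a : ℝ ↦ a⁻¹ * Cconst n) 1 := by fun_prop (disch := norm_num)
    have near_one : ∀ᶠ a in 𝓝[<] (1 : ℝ), a⁻¹ * Cconst n < C :=
      nhdsWithin_le_nhds (this.eventually_lt continuousAt_const (by simpa using hC))
    exact ((eventually_mem_set.2 (Ioo_mem_nhdsLT one_pos)).and near_one).exists
  obtain ⟨err, err_tendsto, le_err⟩ := exists_ofReal_mul_abs_fderiv_le hE ha ha₁ hν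
  have total_lt : ∀ᶠ M in atTop, ENNReal.ofReal (a⁻¹ * (Cconst n * sphereArea n)) + err M <
      ENNReal.ofReal (C * sphereArea n) := by
    refine (tendsto_const_nhds.add err_tendsto).eventually_lt_const ?_
    rw [add_zero, ← mul_assoc]
    exact (ENNReal.ofReal_lt_ofReal_iff (by positivity)).2 (by gcongr)
  obtain ⟨M, hM, hMlt⟩ := ((eventually_gt_atTop 0).and total_lt).exists
  refine ⟨3 * M + 6, by positivity, fun l hl v hv hv₁ hΔv ↦ ?_⟩
  have h := (le_err M hM l hl v hv hv₁ hΔv).trans hMlt.le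
  rw [ENNReal.ofReal_le_ofReal_iff (by positivity), mul_comm] at h
  exact le_of_mul_le_mul_right h hω

end HalfSpace

section InteriorBall

open scoped Laplacian

variable {E F : Type*} [NormedAddCommGroup E] [NormedAddCommGroup F] [NormedSpace ℝ F]

lemma exists_contDiff_eventuallyEq_nhdsSet [NormedSpace ℝ E] [FiniteDimensional ℝ E] {w : E → F}
    {S U : Set E} (hS : IsClosed S) (hU : IsOpen U) (hSU : S ⊆ U) (hw : ContDiffOn ℝ 2 w U) {b : ℝ}
    (hb : 0 ≤ b) (hwb : ∀ z ∈ U, ‖w z‖ ≤ b) :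
    ∃ v : E → F, ContDiff ℝ 2 v ∧ (∀ z, ‖v z‖ ≤ b) ∧ v =ᶠ[𝓝ˢ S] w := by
  obtain ⟨χ, hχ₀, hχ₁, hχ⟩ := exists_contMDiffMap_zero_one_nhds_of_isClosed (n := 2)
    (modelWithCornersSelf ℝ E) hU.isClosed_compl hS (disjoint_compl_left_iff_subset.2 hSU)
  have hχ₀' {z : E} (hz : z ∉ U) : ∀ᶠ y in 𝓝 z, χ y = 0 := eventually_nhdsSet_iff_forall.1 hχ₀ z hz
  refine ⟨fun z ↦ χ z • w z, contDiff_iff_contDiffAt.2 fun z ↦ ?_, fun z ↦ ?_, ?_⟩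
  · by_cases hz : z ∈ U
    · exact χ.contMDiff.contDiff.contDiffAt.smul (hw.contDiffAt (hU.mem_nhds hz))
    · refine contDiffAt_const (c := 0) |>.congr_of_eventuallyEq ?_
      filter_upwards [hχ₀' hz] with y hy
      rw [hy, zero_smul]
  · by_cases hz : z ∈ U
    · rw [norm_smul, Real.norm_of_nonneg (hχ z).1]
      exact (mul_le_of_le_one_left (norm_nonneg _) (hχ z).2).trans (hwb z hz)
    · simpa [(hχ₀' hz).self_of_nhds] using hb
  · filter_upwards [hχ₁] with z hz
    rw [hz, one_smul]

variable [InnerProductSpace ℝ E]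

lemma norm_smul_add_smul_lt {p z : E} {t θ M : ℝ} (hp : p ≠ 0) (ht₀ : 0 ≤ t) (ht₁ : t < 1)
    (hθ₀ : 0 ≤ θ) (hθ₁ : θ < 1) (htM : (1 - t) * (1 + M ^ 2) < 2 * (1 - θ)) (hz : ⟪p, z⟫ ≤ ‖p‖)
    (hzM : ‖z‖ ≤ M) : ‖t • p + (θ * ((1 - t) * ‖p‖)) • z‖ < ‖p‖ := by
  have hp₀ : 0 < ‖p‖ := norm_pos_iff.2 hp
  have ht : 0 < 1 - t := sub_pos.2 ht₁
  set d := θ * ((1 - t) * ‖p‖) with hd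
  have coeff_lt : t ^ 2 + 2 * t * θ * (1 - t) + θ ^ 2 * (1 - t) ^ 2 * M ^ 2 < 1 := by
    have hθ : θ ^ 2 * M ^ 2 ≤ M ^ 2 := mul_le_of_le_one_left (sq_nonneg M) (by nlinarith)
    nlinarith [mul_lt_mul_of_pos_left htM ht]
  refine lt_of_pow_lt_pow_left₀ 2 hp₀.le ?_
  calc ‖t • p + d • z‖ ^ 2 = t ^ 2 * ‖p‖ ^ 2 + 2 * (t * d) * ⟪p, z⟫ + d ^ 2 * ‖z‖ ^ 2 := by
        rw [norm_add_sq_real, norm_smul, norm_smul, real_inner_smul_left, real_inner_smul_right,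
          mul_pow, mul_pow, Real.norm_eq_abs, Real.norm_eq_abs, sq_abs, sq_abs]
        ring
    _ ≤ t ^ 2 * ‖p‖ ^ 2 + 2 * (t * d) * ‖p‖ + d ^ 2 * M ^ 2 := by gcongr
    _ = (t ^ 2 + 2 * t * θ * (1 - t) + θ ^ 2 * (1 - t) ^ 2 * M ^ 2) * ‖p‖ ^ 2 := by
        rw [hd]
        ring
    _ < ‖p‖ ^ 2 := mul_lt_of_lt_one_left (by positivity) coeff_lt

variable [FiniteDimensional ℝ E]

lemma exists_mul_norm_fderiv_le_of_harmonicOnNhd (hE : 2 ≤ finrank ℝ E) {ν : E} (hν : ‖ν‖ = 1)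
    {C : ℝ} (hC : Cconst (finrank ℝ E) < C) : ∃ M > 0, ∀ l : E, ‖l‖ = 1 →
      ∀ (u : E → F) (U : Set E), IsOpen U → HarmonicOnNhd u U → (∀ y ∈ U, ‖u y‖ ≤ 1) →
        ∀ (x : E) (d : ℝ), (∀ z, ⟪ν, z⟫ ≤ 1 → ‖z‖ ≤ M → x + d • z ∈ U) →
          d * ‖fderiv ℝ u x l‖ ≤ C := by
  obtain ⟨M, hM, abs_fderiv_le⟩ := exists_abs_fderiv_le_of_laplacian_eq_zero hE hν hC
  refine ⟨M, hM, fun l hl u U hU hu hu₁ x d hxU ↦ ?_⟩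
  obtain ⟨g, hg, hg_apply⟩ := exists_dual_vector'' ℝ (fderiv ℝ u x l)
  let S : Set E := {z | ⟪ν, z⟫ ≤ 1} ∩ {z | ‖z‖ ≤ M}
  have hS : IsClosed S := (isClosed_le (by fun_prop) (by fun_prop)).inter
    (isClosed_le (by fun_prop) (by fun_prop))
  have h0S : (0 : E) ∈ S := by simp [S, hM.le]
  have hgu : HarmonicOnNhd (g ∘ u) U := hu.comp_CLM g
  obtain ⟨v, hv, hv₁, hvw⟩ := exists_contDiff_eventuallyEq_nhdsSet (U := {z | x + d • z ∈ U})
    (w := fun z ↦ (g ∘ u) (x + d • z)) hS (hU.preimage (by fun_prop))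
    (fun z hz ↦ hxU z hz.1 hz.2) (hgu.contDiffOn.comp (by fun_prop) fun z hz ↦ hz) zero_le_one
    fun z hz ↦ (g.le_of_opNorm_le_of_le hg (hu₁ _ hz)).trans_eq (one_mul 1)
  have hvw' {z : E} (hz : z ∈ S) : v =ᶠ[𝓝 z] fun z ↦ (g ∘ u) (x + d • z) :=
    eventually_nhdsSet_iff_forall.1 hvw z hz
  have laplacian_v (z : E) (hz : ⟪ν, z⟫ ≤ 1) (hzM : ‖z‖ ≤ M) : Δ v z = 0 := by
    rw [(laplacian_congr_nhds (hvw' ⟨hz, hzM⟩)).self_of_nhds, laplacian_comp_add_smul,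
      (hgu _ (hxU z hz hzM)).2.self_of_nhds, Pi.zero_apply, smul_zero]
  have fderiv_v : fderiv ℝ v 0 l = d * ‖fderiv ℝ u x l‖ := by
    have hux : DifferentiableAt ℝ u x :=
      (hu x (by simpa using hxU 0 h0S.1 h0S.2)).1.differentiableAt (by norm_num)
    rw [(hvw' h0S).fderiv_eq, fderiv_comp_add_smul, smul_zero, add_zero,
      fderiv_comp x g.differentiableAt hux, g.fderiv, smul_apply,
      ContinuousLinearMap.comp_apply, hg_apply, smul_eq_mul]
    rfl
  rw [← fderiv_v]
  exact (le_abs_self _).trans (abs_fderiv_le l hl v hv hv₁ laplacian_v)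

theorem limsup_directional_derivative_interior_ball_general (hE : 2 ≤ finrank ℝ E) {c ξ : E} {R : ℝ}
    (hR : 0 < R) (hξ : ξ ∈ sphere c R) {ε : ℝ} (hε : 0 < ε) :
    ∃ δ > 0, ∀ t : ℝ, 1 - δ < t → t < 1 →
      ∀ u : E → F, HarmonicOnNhd u (ball c R) → (∀ y ∈ ball c R, ‖u y‖ ≤ 1) →
        ∀ l : E, ‖l‖ = 1 →
          dist (c + t • (ξ - c)) ξ * ‖fderiv ℝ u (c + t • (ξ - c)) l‖ ≤
            Cconst (finrank ℝ E) + ε := by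
  have hC := Cconst_nonneg hE
  set C := Cconst (finrank ℝ E)
  set p := ξ - c
  have hpR : ‖p‖ = R := mem_sphere_iff_norm.1 hξ
  have hp₀ : p ≠ 0 := norm_pos_iff.1 (hpR ▸ hR)
  have hν : ‖‖p‖⁻¹ • p‖ = 1 := norm_smul_inv_norm (𝕜 := ℝ) hp₀
  obtain ⟨M, -, mul_fderiv_le⟩ :=
    exists_mul_norm_fderiv_le_of_harmonicOnNhd (F := F) hE hν (lt_add_of_pos_right C (half_pos hε))
  -- Blowing up by `θ * dist x ξ` with `θ < 1` leaves room for the curvature of the ball.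
  set θ := (C + ε / 2) / (C + ε)
  have hθ₀ : 0 < θ := by positivity
  have hθ₁ : θ < 1 := (div_lt_one (by positivity)).2 (by linarith)
  refine ⟨min 1 (2 * (1 - θ) / (1 + M ^ 2)), ?_, fun t ht ht₁ u hu hu₁ l hl ↦ ?_⟩
  · have := sub_pos.2 hθ₁
    positivity
  obtain ⟨ht₀, htM⟩ : 1 - t < 1 ∧ 1 - t < 2 * (1 - θ) / (1 + M ^ 2) := lt_min_iff.1 (by linarith)
  have dist_eq : dist (c + t • p) ξ = (1 - t) * ‖p‖ := by
    rw [dist_comm, dist_eq_norm, ← Real.norm_of_nonneg (sub_pos.2 ht₁).le, ← norm_smul, sub_smul,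
      one_smul, ← sub_sub]
  have mem_ball_of_inner_le (z : E) (hz : ⟪‖p‖⁻¹ • p, z⟫ ≤ 1) (hzM : ‖z‖ ≤ M) :
      c + t • p + (θ * dist (c + t • p) ξ) • z ∈ ball c R := by
    rw [real_inner_smul_left, inv_mul_le_one₀ (hpR ▸ hR)] at hz
    rw [mem_ball_iff_norm, add_assoc, add_sub_cancel_left, dist_eq, ← hpR]
    exact norm_smul_add_smul_lt hp₀ (by linarith) ht₁ hθ₀.le hθ₁
      ((lt_div_iff₀ (by positivity)).1 htM) hz hzM
  have key := mul_fderiv_le l hl u _ isOpen_ball hu hu₁ _ _ mem_ball_of_inner_le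
  rw [mul_assoc, ← div_mul_cancel₀ (C + ε / 2) (by positivity : C + ε ≠ 0)] at key
  exact le_of_mul_le_mul_left key hθ₀

end InteriorBall

section Coordinates

open scoped Laplacian

lemma harmonicOnNhd_of_isHarmonicOn_apply {n m : ℕ} {u : Eu n → Eu m} {Ω : Set (Eu n)}
    (hΩ : IsOpen Ω) (hu : ∀ j : Fin m, IsHarmonicOn (fun y ↦ u y j) Ω) : HarmonicOnNhd u Ω := by
  have hu₂ {y : Eu n} (hy : y ∈ Ω) : ContDiffAt ℝ 2 u y :=
    contDiffAt_euclidean.2 fun j ↦ (hu j).1.contDiffAt (hΩ.mem_nhds hy)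
  intro x hx
  refine ⟨hu₂ hx, ?_⟩
  filter_upwards [hΩ.mem_nhds hx] with y hy
  ext j
  calc Δ u y j = Δ (fun y ↦ u y j) y :=
        ((hu₂ hy).laplacian_CLM_comp_left (l := EuclideanSpace.proj j)).symm
    _ = 0 := by
        rw [laplacian_eq_sum_fderiv_fderiv_apply (EuclideanSpace.basisFun (Fin n) ℝ)
          ((hu j).1.contDiffAt (hΩ.mem_nhds hy))]
        simpa using (hu j).2 y hy

end Coordinates

end

/-- Let `Ω ⊂ ℝⁿ` (`n ≥ 2`) be a domain and suppose `ξ ∈ ∂Ω` is touched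
by an interior ball `B = ball c R ⊆ Ω`. Then, along the radius `x_t = c + t(ξ - c)`,
`limsup_{x→ξ} sup_{u ∈ 𝔘(Ω)} max_{|ℓ|=1} |x-ξ| |(ℓ,∇)u(x)| ≤ C_n`, where `𝔘(Ω)` is
the set of `m`-component vector fields with harmonic components and `sup_Ω |u| ≤ 1`:
for every `ε > 0` there is `δ > 0` such that for all `t ∈ (1-δ, 1)`, all such `u` and
all unit vectors `ℓ`, `|x_t - ξ| |(ℓ,∇)u(x_t)| ≤ C_n + ε`. -/
theorem limsup_directional_derivative_interior_ball
    (n m : ℕ) (hn : 2 ≤ n) (hm : 1 ≤ m)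
    (Ω : Set (Eu n)) (hΩo : IsOpen Ω) (hΩc : IsConnected Ω)
    (c ξ : Eu n) (R : ℝ) (hR : 0 < R)
    (hball : Metric.ball c R ⊆ Ω) (hξs : ξ ∈ Metric.sphere c R) (hξ : ξ ∈ frontier Ω)
    (ε : ℝ) (hε : 0 < ε) :
    ∃ δ > 0, ∀ t : ℝ, 1 - δ < t → t < 1 →
      ∀ u : Eu n → Eu m, (∀ j : Fin m, IsHarmonicOn (fun y => u y j) Ω) →
        (∀ y ∈ Ω, ‖u y‖ ≤ 1) →
        ∀ ℓ : Eu n, ‖ℓ‖ = 1 →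
          dist (c + t • (ξ - c)) ξ * ‖fderiv ℝ u (c + t • (ξ - c)) ℓ‖ ≤ Cconst n + ε := by
  obtain ⟨δ, hδ, h⟩ := limsup_directional_derivative_interior_ball_general (E := Eu n) (F := Eu m)
    (by simpa using hn) hR hξs hε
  refine ⟨δ, hδ, fun t ht ht₁ u hu hu₁ ℓ hℓ ↦ ?_⟩
  simpa only [finrank_euclideanSpace_fin] using h t ht ht₁ u
    ((harmonicOnNhd_of_isHarmonicOn_apply hΩo hu).mono hball) (fun y hy ↦ hu₁ y (hball hy)) ℓ hℓ
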